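/- arXiv:2602.24274 — 5 statements merged into one kernel-verified Lean document; each statement's English description precedes it below -/
import Mathlib

section
/- Let G be a finite simple graph. Then G has more than one perfect matching if and only if G contains a cycle Γ with an even number of vertices such that the induced subgraph G − V(Γ) has a perfect matching. -/
/-!
A perfect matching is the same thing as an involution `f : V → V` with `v` adjacent to `f v` for
every `v` (`IsPM.exists_partner`, `exists_isPM_of_partner`), and the proof is carried out with such
partner maps.

Let `f ≠ g` be two partner maps. The graph joining `v` to `f v` and `g v` wherever `f v ≠ g v` (the
symmetric difference of the two matchings) is 2-regular on its non-isolated vertices, so each of its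
nontrivial components is a cycle. The vertex set of such a cycle is stable under `f`. As `f` has no
fixed point, the cycle is even, and as `f` also preserves the complement, it restricts to a perfect
matching there.

Conversely, an even cycle `v₀, …, v₍ₙ₋₁₎` has the two perfect matchings `v₀v₁, v₂v₃, …` and
`v₁v₂, …, v₍ₙ₋₁₎v₀`. Each of them extends by the given perfect matching of the complement
(`exists_partner_of_cycle`), and the results differ because `v₁ ≠ v₍ₙ₋₁₎`.
-/

open SimpleGraph

/-- A perfect matching of a simple graph, given as a finite set of edges in which
every vertex lies in exactly one edge. -/
def IsPM {V : Type*} [DecidableEq V] (G : SimpleGraph V) (M : Finset (Sym2 V)) : Prop :=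
  (∀ e ∈ M, e ∈ G.edgeSet) ∧ ∀ v : V, (M.filter (fun e => v ∈ e)).card = 1

/-- `G` has a perfect matching. -/
def HasPM {V : Type*} [DecidableEq V] (G : SimpleGraph V) : Prop :=
  ∃ M, IsPM G M

/-- `(G, A)` is a 3-colored digraph: `A` is Hermitian with zero diagonal, entries in
`{1, -1, i, -i}` on edges of `G`, and `0` on non-edges. -/
def ThreeColored {V : Type*} (G : SimpleGraph V) (A : Matrix V V ℂ) : Prop :=
  A.IsHermitian ∧ (∀ v, A v v = 0) ∧
    (∀ u v, G.Adj u v → A u v ∈ ({1, -1, Complex.I, -Complex.I} : Set ℂ)) ∧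
    (∀ u v, u ≠ v → ¬ G.Adj u v → A u v = 0)

/-- The weight of a walk: the product of the entries of `A` along its darts. -/
def walkWeight {V : Type*} {G : SimpleGraph V} (A : Matrix V V ℂ) {u v : V}
    (p : G.Walk u v) : ℂ :=
  (p.darts.map (fun d => A d.toProd.1 d.toProd.2)).prod

/-- A closed walk (e.g. a cycle) `c` is independent in `G` if `G - V(c)` has a
perfect matching. -/
def IsIndep {V : Type*} [DecidableEq V] (G : SimpleGraph V) {u : V} (c : G.Walk u u) : Prop :=
  HasPM (G.induce {x : V | x ∉ c.support})

/-- The number of perfect matchings of `G`. -/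
noncomputable def numPM (V : Type*) [DecidableEq V] (G : SimpleGraph V) : ℕ :=
  {M : Finset (Sym2 V) | IsPM G M}.ncard

/-- A connected graph on `n` vertices is unicyclic if it has exactly `n` edges. -/
def Unicyclic (V : Type*) [Fintype V] (G : SimpleGraph V) : Prop :=
  G.Connected ∧ G.edgeSet.ncard = Fintype.card V

/-- A connected graph on `n` vertices is bicyclic if it has exactly `n + 1` edges. -/
def Bicyclic (V : Type*) [Fintype V] (G : SimpleGraph V) : Prop :=
  G.Connected ∧ G.edgeSet.ncard = Fintype.card V + 1

/-- Two cycles are regarded as the same cycle when they have the same edge set. -/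
def SameCycle {V : Type*} [DecidableEq V] {G : SimpleGraph V} {u v : V}
    (c : G.Walk u u) (d : G.Walk v v) : Prop :=
  c.edges.toFinset = d.edges.toFinset

/-- A bicyclic graph is of ∞-type if its cycles are pairwise edge-disjoint. -/
def InfinityType {V : Type*} [DecidableEq V] (G : SimpleGraph V) : Prop :=
  ∀ (u v : V) (c : G.Walk u u) (d : G.Walk v v), c.IsCycle → d.IsCycle →
    ¬ SameCycle c d → ∀ e ∈ c.edges, e ∉ d.edges

/-- A bicyclic graph is of θ-type if it is not of ∞-type. -/
def ThetaType {V : Type*} [DecidableEq V] (G : SimpleGraph V) : Prop :=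
  ¬ InfinityType G

/-- `e` is a peg on the cycle `c`: either a chord of `c`, or an edge joining a vertex
of `c` to a vertex outside `c`. -/
def IsPeg {V : Type*} {G : SimpleGraph V} {u : V} (c : G.Walk u u) (e : Sym2 V) : Prop :=
  ∃ x y, e = s(x, y) ∧
    ((x ∈ c.support ∧ y ∈ c.support ∧ e ∉ c.edges) ∨ (x ∈ c.support ∧ y ∉ c.support))

/-- The number of pegs on the cycle `c` relative to the perfect matching `M`. -/
noncomputable def pegCount {V : Type*} {G : SimpleGraph V} {u : V} (c : G.Walk u u)
    (M : Finset (Sym2 V)) : ℕ :=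
  {e : Sym2 V | e ∈ M ∧ IsPeg c e}.ncard

/-- A path is mm-alternating relative to `M` if its edges alternately belong to `M`,
beginning and ending with edges of `M`. -/
def MMAlt {V : Type*} {G : SimpleGraph V} (M : Finset (Sym2 V)) {a b : V}
    (p : G.Walk a b) : Prop :=
  p.IsPath ∧ Odd p.length ∧
    ∀ (k : ℕ) (h : k < p.edges.length), (p.edges.get ⟨k, h⟩ ∈ M ↔ Even k)
/-- A perfect matching yields the map sending each vertex to its partner. -/
lemma IsPM.exists_partner {V : Type*} [DecidableEq V] {G : SimpleGraph V} {M : Finset (Sym2 V)}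
    (h : IsPM G M) :
    ∃ f : V → V, (∀ v, f (f v) = v) ∧ (∀ v, G.Adj v (f v)) ∧ ∀ a b, s(a, b) ∈ M ↔ f a = b := by
  obtain ⟨hG, hM⟩ := h
  have key : ∀ v, ∃ w, ∀ b, s(v, b) ∈ M ↔ w = b := by
    intro v
    obtain ⟨e, he⟩ := Finset.card_eq_one.1 (hM v)
    have hmem : ∀ e', (e' ∈ M ∧ v ∈ e') ↔ e' = e := fun e' => by
      simpa using Finset.ext_iff.1 he e'
    obtain ⟨w, rfl⟩ := Sym2.mem_iff_exists.1 ((hmem e).2 rfl).2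
    refine ⟨w, fun b => ?_⟩
    have := hmem s(v, b)
    simp only [Sym2.mem_iff, true_or, and_true, Sym2.congr_right] at this
    rw [this, eq_comm]
  choose f hf using key
  refine ⟨f, fun v => ?_, fun v => hG _ ((hf v _).2 rfl), hf⟩
  rw [← hf, Sym2.eq_swap, hf]

/-- Every partner map comes from a perfect matching. -/
lemma exists_isPM_of_partner {V : Type*} [Fintype V] [DecidableEq V] {G : SimpleGraph V}
    {f : V → V} (hf : ∀ v, f (f v) = v) (hadj : ∀ v, G.Adj v (f v)) :
    ∃ M, IsPM G M ∧ ∀ a b, s(a, b) ∈ M ↔ f a = b := by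
  have hmem : ∀ a b, s(a, b) ∈ Finset.univ.image (fun v => s(v, f v)) ↔ f a = b := by
    intro a b
    simp only [Finset.mem_image, Finset.mem_univ, true_and, Sym2.eq_iff]
    constructor
    · rintro ⟨v, ⟨rfl, rfl⟩ | ⟨rfl, rfl⟩⟩
      · rfl
      · exact hf v
    · rintro rfl
      exact ⟨a, Or.inl ⟨rfl, rfl⟩⟩
  refine ⟨Finset.univ.image (fun v => s(v, f v)), ⟨?_, fun v => ?_⟩, hmem⟩
  · intro e he
    obtain ⟨v, -, rfl⟩ := Finset.mem_image.1 he
    exact hadj v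
  · rw [Finset.card_eq_one]
    refine ⟨s(v, f v), ?_⟩
    ext e
    rw [Finset.mem_filter, Finset.mem_singleton]
    constructor
    · rintro ⟨he, hv⟩
      obtain ⟨w, rfl⟩ := Sym2.mem_iff_exists.1 hv
      rw [(hmem v w).1 he]
    · rintro rfl
      exact ⟨(hmem _ _).2 rfl, Sym2.mem_mk_left _ _⟩

lemma even_card_of_involution {V : Type*} (s : Finset V) (f : V → V) (hf : ∀ v, f (f v) = v)
    (hne : ∀ v, f v ≠ v) (hs : ∀ v ∈ s, f v ∈ s) : Even s.card := by
  -- Modulo 2, the ones indexed by `v` and `f v` cancel.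
  have h : ∑ _v ∈ s, (1 : ZMod 2) = 0 :=
    Finset.sum_involution (fun v _ => f v) (fun _ _ => by decide) (fun v _ _ => hne v) hs
      (fun v _ => hf v)
  rw [Finset.sum_const, nsmul_one] at h
  exact (ZMod.natCast_eq_zero_iff_even).1 h

lemma IsCycle.card_support_toFinset {V : Type*} [DecidableEq V] {G : SimpleGraph V} {u : V}
    {c : G.Walk u u} (hc : c.IsCycle) : c.support.toFinset.card = c.length := by
  have h : c.support.toFinset = c.support.tail.toFinset := by
    ext x
    rw [List.mem_toFinset, List.mem_toFinset, Walk.mem_support_iff]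
    refine or_iff_right_of_imp ?_
    rintro rfl
    exact Walk.end_mem_tail_support hc.not_nil
  rw [h, List.toFinset_card_of_nodup hc.support_nodup, List.length_tail, Walk.length_support]
  rfl

/-- A pairing `σ` of the positions on a cycle along edges of `G`, together with a perfect matching
of the complement of the cycle, gives a partner map of `G`. -/
lemma exists_partner_of_cycle {V : Type*} [DecidableEq V] {G : SimpleGraph V} {u : V}
    {c : G.Walk u u} (hc : c.IsCycle) (hI : IsIndep G c) (σ : ℕ → ℕ)
    (hlt : ∀ i < c.length, σ i < c.length) (hσ : ∀ i < c.length, σ (σ i) = i)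
    (hadj : ∀ i < c.length, G.Adj (c.getVert i) (c.getVert (σ i))) :
    ∃ f : V → V, (∀ v, f (f v) = v) ∧ (∀ v, G.Adj v (f v)) ∧
      ∀ i < c.length, f (c.getVert i) = c.getVert (σ i) := by
  obtain ⟨N, hN⟩ := hI
  obtain ⟨g, hg, hgadj, -⟩ := hN.exists_partner
  have hpos : 0 < c.length := by have := hc.three_le_length; omega
  have hidx : ∀ v : {v : V // v ∈ c.support}, ∃ i < c.length, c.getVert i = v := by
    rintro ⟨v, hv⟩
    obtain ⟨i, rfl, hi⟩ := Walk.mem_support_iff_exists_getVert.1 hv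
    rcases hi.lt_or_eq with h | rfl
    · exact ⟨i, h, rfl⟩
    · exact ⟨0, hpos, by simp⟩
  choose idx hidx_lt hidx using hidx
  have hinj : ∀ i < c.length, ∀ h : c.getVert i ∈ c.support, idx ⟨c.getVert i, h⟩ = i := by
    intro i hi h
    have := hidx_lt ⟨c.getVert i, h⟩
    exact hc.getVert_injOn' (by simp only [Set.mem_ofPred_eq]; omega)
      (by simp only [Set.mem_ofPred_eq]; omega) (hidx _)
  let f : V → V := fun v =>
    if h : v ∈ c.support then c.getVert (σ (idx ⟨v, h⟩)) else (g ⟨v, h⟩ : V)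
  have hf1 : ∀ i < c.length, f (c.getVert i) = c.getVert (σ i) := by
    intro i hi
    have h := c.getVert_mem_support i
    simp only [f, dif_pos h, hinj i hi h]
  have hf2 : ∀ v (h : v ∉ c.support), f v = (g ⟨v, h⟩ : V) := fun v h => dif_neg h
  refine ⟨f, fun v => ?_, fun v => ?_, hf1⟩
  · by_cases h : v ∈ c.support
    · have hi := hidx_lt ⟨v, h⟩
      have hv : c.getVert (idx ⟨v, h⟩) = v := hidx ⟨v, h⟩
      rw [← hv, hf1 _ hi, hf1 _ (hlt _ hi), hσ _ hi]
    · rw [hf2 v h, hf2 _ (g ⟨v, h⟩).2]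
      exact congrArg Subtype.val (hg ⟨v, h⟩)
  · by_cases h : v ∈ c.support
    · have hi := hidx_lt ⟨v, h⟩
      have hv : c.getVert (idx ⟨v, h⟩) = v := hidx ⟨v, h⟩
      rw [← hv, hf1 _ hi]
      exact hadj _ hi
    · rw [hf2 v h]
      exact hgadj ⟨v, h⟩

/-- The symmetric difference of the matchings with partner maps `f` and `g`: wherever `f` and `g`
disagree, `v` is joined to `f v` and to `g v`. -/
def diffGraph {V : Type*} (f g : V → V) (hf : ∀ v, f (f v) = v) (hg : ∀ v, g (g v) = v)
    (hf0 : ∀ v, f v ≠ v) (hg0 : ∀ v, g v ≠ v) : SimpleGraph V where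
  Adj a b := f a ≠ g a ∧ (f a = b ∨ g a = b)
  symm := ⟨by grind⟩
  loopless := ⟨by grind⟩

/-- A finite simple graph has more than one perfect matching iff it
contains an even cycle `Γ` such that `G − V(Γ)` has a perfect matching. -/
theorem stmt0 {V : Type*} [Fintype V] [DecidableEq V] (G : SimpleGraph V) :
    (∃ M M' : Finset (Sym2 V), IsPM G M ∧ IsPM G M' ∧ M ≠ M') ↔
      ∃ (u : V) (c : G.Walk u u), c.IsCycle ∧ Even c.length ∧ IsIndep G c := by
  constructor
  · rintro ⟨M, M', hM, hM', hne⟩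
    obtain ⟨f, hf, hfadj, hfM⟩ := hM.exists_partner
    obtain ⟨g, hg, hgadj, hgM⟩ := hM'.exists_partner
    have hfg : ∃ v, f v ≠ g v := by
      by_contra! h
      refine hne (Finset.ext fun e => ?_)
      induction e using Sym2.ind with
      | _ a b => rw [hfM, hgM, h]
    obtain ⟨v, hv⟩ := hfg
    have hf0 : ∀ v, f v ≠ v := fun v => (hfadj v).ne'
    let D := diffGraph f g hf hg hf0 (fun v => (hgadj v).ne')
    have hDG : D ≤ G := by
      rintro a b ⟨-, rfl | rfl⟩
      · exact hfadj a
      · exact hgadj a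
    have hcyc : D.IsCycles := by
      rintro a ⟨b, hab, -⟩
      have : D.neighborSet a = {f a, g a} := by
        ext x
        change (f a ≠ g a ∧ (f a = x ∨ g a = x)) ↔ (x = f a ∨ x = g a)
        simp only [hab, ne_eq, not_false_eq_true, true_and, eq_comm]
      rw [this, Set.ncard_pair hab]
    obtain ⟨p, hp, hpv⟩ := hcyc.exists_cycle_toSubgraph_verts_eq_connectedComponentSupp
      (v := v) (c := D.connectedComponentMk v) rfl ⟨f v, hv, Or.inl rfl⟩
    have hsupp : ∀ x, x ∈ p.support ↔ D.connectedComponentMk x = D.connectedComponentMk v := by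
      intro x
      rw [← Walk.mem_verts_toSubgraph, hpv, ConnectedComponent.mem_supp_iff]
    have hstab : ∀ x, x ∈ p.support → f x ∈ p.support := by
      intro x hx
      have hxD : f x ≠ g x := by
        obtain ⟨y, hy⟩ := (Walk.mem_support_iff_exists_mem_edges_of_not_nil hp.not_nil).1 hx
        obtain ⟨z, rfl⟩ := Sym2.mem_iff_exists.1 hy.2
        exact (p.adj_of_mem_edges hy.1).1
      have hadj : D.Adj x (f x) := ⟨hxD, Or.inl rfl⟩
      rw [hsupp] at hx ⊢
      rw [← hx]
      exact (ConnectedComponent.connectedComponentMk_eq_of_adj hadj).symm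
    refine ⟨v, p.mapLe hDG, (Walk.isCycle_mapLe hDG).2 hp, ?_, ?_⟩
    · rw [Walk.length_mapLe, ← IsCycle.card_support_toFinset hp]
      exact even_card_of_involution _ f hf hf0 (by simpa using hstab)
    · have hstab' : ∀ x : {x : V | x ∉ (p.mapLe hDG).support},
          f x ∈ {x : V | x ∉ (p.mapLe hDG).support} := by
        rintro ⟨x, hx⟩
        simp only [Set.mem_ofPred_eq, Walk.support_mapLe_eq_support] at hx ⊢
        exact fun h => hx (hf x ▸ hstab _ h)
      obtain ⟨N, hN, -⟩ := exists_isPM_of_partner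
        (G := G.induce {x : V | x ∉ (p.mapLe hDG).support}) (f := fun x => ⟨f x, hstab' x⟩)
        (fun x => Subtype.ext (hf x)) (fun x => hfadj x)
      exact ⟨N, hN⟩
  · rintro ⟨u, c, hc, heven, hI⟩
    have h3 := hc.three_le_length
    obtain ⟨m, hm⟩ := heven
    have hlast : c.getVert c.length = c.getVert 0 := by simp
    have hsucc : ∀ i < c.length, G.Adj (c.getVert i) (c.getVert (i + 1)) :=
      fun i hi => c.adj_getVert_succ hi
    have hpred : ∀ i, 0 < i → i < c.length → G.Adj (c.getVert i) (c.getVert (i - 1)) := by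
      intro i h0 hi
      have := hsucc (i - 1) (by omega)
      rw [Nat.sub_add_cancel h0] at this
      exact this.symm
    -- Pair position `2k` with `2k + 1`.
    obtain ⟨f, hf, hfadj, hfc⟩ := exists_partner_of_cycle hc hI
      (fun i => if i % 2 = 0 then i + 1 else i - 1)
      (fun i hi => by split_ifs <;> omega)
      (fun i hi => by split_ifs <;> omega)
      (fun i hi => by
        split_ifs
        · exact hsucc i hi
        · exact hpred i (by omega) hi)
    -- Pair position `2k + 1` with `2k + 2`, cyclically, so that the last position goes with `0`.
    obtain ⟨g, hg, hgadj, hgc⟩ := exists_partner_of_cycle hc hI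
      (fun i => if i = 0 then c.length - 1 else if i = c.length - 1 then 0
        else if i % 2 = 0 then i - 1 else i + 1)
      (fun i hi => by split_ifs <;> omega)
      (fun i hi => by
        generalize hj : (if i = 0 then c.length - 1 else if i = c.length - 1 then 0
          else if i % 2 = 0 then i - 1 else i + 1) = j
        split_ifs at hj ⊢ <;> omega)
      (fun i hi => by
        have hwrap := hsucc (c.length - 1) (by omega)
        rw [Nat.sub_add_cancel (by omega), hlast] at hwrap
        split_ifs with h1 h2
        · rw [h1]; exact hwrap.symm
        · rw [h2]; exact hwrap
        · exact hpred i (by omega) hi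
        · exact hsucc i hi)
    obtain ⟨M, hM, hMf⟩ := exists_isPM_of_partner hf hfadj
    obtain ⟨M', hM', hMg⟩ := exists_isPM_of_partner hg hgadj
    refine ⟨M, M', hM, hM', ?_⟩
    rintro rfl
    -- Equality of the two matchings would give position `0` the partners `1` and `c.length - 1`.
    have h1 := (hMg _ _).1 ((hMf _ _).2 (hfc 0 (by omega)))
    rw [hgc 0 (by omega)] at h1
    have := hc.getVert_injOn' (by simp only [Set.mem_ofPred_eq]; simp)
      (by simp only [Set.mem_ofPred_eq]; simp; omega) h1
    simp at this
    omega
end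

section
/- Let (G, A) be a 3-colored digraph such that G has no perfect matching and every cycle of G has an even number of vertices. Then det A = 0. -/
/-!
A graph all of whose cycles are even is bipartite (`colorable_two_of_forall_isCycle_even`):
cutting the closed detours out of a closed walk preserves the parity of its length and leaves the
empty walk, so every closed walk is even.

If `det A ≠ 0`, some term of the Leibniz expansion is nonzero, so there is a permutation `σ` with
`A (σ v) v ≠ 0`, hence `σ v` adjacent to `v`, for all `v`. Since `σ` exchanges the two colour
classes, the edges `{v, σ v}` with `v` in one class form a perfect matching (`hasPM_of_perm`).
-/

open SimpleGraph

/-- If all cycles of `G` are even, deleting the closed detours of a walk preserves the parity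
of its length: each detour removed by `bypass` is a cycle or a backtracked edge. -/
theorem even_length_bypass_iff {V : Type*} [DecidableEq V] {G : SimpleGraph V}
    (heven : ∀ (u : V) (c : G.Walk u u), c.IsCycle → Even c.length)
    {u v : V} (p : G.Walk u v) : Even p.bypass.length ↔ Even p.length := by
  induction p with
  | nil => simp [Walk.bypass]
  | @cons u v w h p ih =>
    rw [Walk.length_cons, Nat.even_add_one, ← ih, Walk.bypass]
    split_ifs with hs
    · have hadd : (p.bypass.takeUntil u hs).length + (p.bypass.dropUntil u hs).length
          = p.bypass.length := by
        rw [← Walk.length_append, Walk.take_spec]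
      have hpath : (p.bypass.takeUntil u hs).IsPath := p.bypass_isPath.takeUntil hs
      have hpos : (p.bypass.takeUntil u hs).length ≠ 0 :=
        fun h0 => h.ne (Walk.eq_of_length_eq_zero h0).symm
      have hodd : Even ((p.bypass.takeUntil u hs).length + 1) := by
        by_cases h1 : (p.bypass.takeUntil u hs).length = 1
        · rw [h1]; decide
        · have hc : (Walk.cons h (p.bypass.takeUntil u hs)).IsCycle := by
            rw [Walk.isCycle_iff_isPath_tail_and_le_length]
            refine ⟨by simpa using hpath, ?_⟩
            rw [Walk.length_cons]
            omega
          simpa using heven u _ hc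
      rw [← hadd]
      grind
    · rw [Walk.length_cons, Nat.even_add_one]

theorem colorable_two_of_forall_isCycle_even {V : Type*} [DecidableEq V] {G : SimpleGraph V}
    (heven : ∀ (u : V) (c : G.Walk u u), c.IsCycle → Even c.length) : G.Colorable 2 := by
  rw [two_colorable_iff_forall_loop_even]
  intro u w
  rw [← even_length_bypass_iff heven w, Walk.isPath_iff_nil.1 w.bypass_isPath |>.eq_nil]
  simp

/-- In a 2-coloured graph, a permutation moving every vertex to a neighbour restricts to a
bijection between the colour classes, and its edges at the class of colour `0` form a perfect
matching. -/
theorem hasPM_of_perm {V : Type*} [Fintype V] [DecidableEq V] {G : SimpleGraph V}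
    (C : G.Coloring (Fin 2)) (σ : Equiv.Perm V) (hσ : ∀ v, G.Adj (σ v) v) : HasPM G := by
  have hcol : ∀ v, C (σ v) ≠ C v := fun v => C.valid (hσ v)
  refine ⟨(Finset.univ.filter (fun v => C v = 0)).image (fun v => s(v, σ v)), ?_, ?_⟩
  · intro e he
    obtain ⟨v, -, rfl⟩ := Finset.mem_image.1 he
    exact (hσ v).symm
  · intro v
    rw [Finset.card_eq_one]
    -- The matching edge at `v` starts at `v` or at its preimage, according to the colour of `v`.
    by_cases hv : C v = 0
    · refine ⟨s(v, σ v), ?_⟩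
      ext e
      simp only [Finset.mem_filter, Finset.mem_image, Finset.mem_univ, true_and,
        Finset.mem_singleton]
      constructor
      · rintro ⟨⟨w, hw, rfl⟩, hvw⟩
        rcases Sym2.mem_iff.1 hvw with rfl | rfl
        · rfl
        · exact absurd (hv.trans hw.symm) (hcol w)
      · rintro rfl
        exact ⟨⟨v, hv, rfl⟩, by simp⟩
    · refine ⟨s(σ.symm v, v), ?_⟩
      ext e
      simp only [Finset.mem_filter, Finset.mem_image, Finset.mem_univ, true_and,
        Finset.mem_singleton]
      constructor
      · rintro ⟨⟨w, hw, rfl⟩, hvw⟩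
        rcases Sym2.mem_iff.1 hvw with rfl | rfl
        · exact absurd hw hv
        · simp
      · rintro rfl
        refine ⟨⟨σ.symm v, ?_, by simp⟩, by simp⟩
        have := hcol (σ.symm v)
        rw [Equiv.apply_symm_apply] at this
        omega

/-- A 3-colored digraph with no perfect matching, all of whose cycles
are even, is singular. -/
theorem stmt3 {V : Type*} [Fintype V] [DecidableEq V] (G : SimpleGraph V)
    (A : Matrix V V ℂ) (hA : ThreeColored G A) (hnpm : ¬ HasPM G)
    (heven : ∀ (u : V) (c : G.Walk u u), c.IsCycle → Even c.length) :
    A.det = 0 := by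
  rw [Matrix.det_apply]
  refine Finset.sum_eq_zero fun σ _ => ?_
  by_contra hne
  have hprod : ∏ v, A (σ v) v ≠ 0 := fun h0 => hne (by rw [h0, smul_zero])
  rw [Finset.prod_ne_zero_iff] at hprod
  obtain ⟨-, hdiag, -, hoff⟩ := hA
  have hadj : ∀ v, G.Adj (σ v) v := by
    intro v
    by_contra hn
    refine hprod v (Finset.mem_univ v) ?_
    by_cases hvv : σ v = v
    · rw [hvv, hdiag]
    · exact hoff _ _ hvv hn
  obtain ⟨C⟩ := colorable_two_of_forall_isCycle_even heven
  exact hnpm (hasPM_of_perm C σ hadj)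
end

section
/- Let (U, A) be a 3-colored digraph where U is a connected unicyclic graph whose unique cycle has weight in {i, −i}. Then det A ≠ 0 if and only if U has a perfect matching. -/
/-!
Expand `det A = ∑ σ, sign σ * ∏ i, A (σ i) i`.

If `σ * σ ≠ 1`, then `σ` has an orbit of length at least three. Reversing one such orbit
(`flipPerm`) is a sign-preserving involution on these permutations, provided that the orbit is
chosen through the set `longPart σ`, which reversal does not change. As `A` is Hermitian, the
reversal conjugates the product of the entries over the orbit. This product is `0` unless the orbit
is a cycle of the graph, and then it is the weight `±i` of that cycle; so it is always purely
imaginary, the reversal changes its sign, and the terms cancel in pairs (`sum_longPart_eq_zero`).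

If `σ * σ = 1`, the term is nonzero exactly when every vertex is adjacent to its image, i.e. when
`σ` swaps the endpoints of the edges of a perfect matching. Each such term is
`(-1) ^ (n / 2)` because `A u v * A v u = 1` on edges. Hence `det A` is `± 1` times the number of
these `σ`, and it vanishes iff there is no perfect matching.
-/

open SimpleGraph

open Equiv Equiv.Perm

/-! ### Reversing an orbit of a permutation -/

section Flip

variable {V : Type*} [Fintype V] [DecidableEq V]

/-- The permutation obtained from `σ` by reversing the orbit of `v`. -/
def flipPerm (σ : Perm V) (v : V) : Perm V :=
  σ * (σ.cycleOf v)⁻¹ * (σ.cycleOf v)⁻¹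

/-- The union of the orbits of `σ` of length at least three. -/
def longPart (σ : Perm V) : Finset V :=
  Finset.univ.filter fun y => σ y ≠ σ⁻¹ y

theorem flipPerm_apply (σ : Perm V) (v y : V) :
    flipPerm σ v y = if σ.SameCycle v y then σ⁻¹ y else σ y := by
  unfold flipPerm
  rw [cycleOf_inv]
  simp only [Perm.mul_apply, cycleOf_apply, sameCycle_inv]
  by_cases h : σ.SameCycle v y
  · simp [h]
  · simp [h]

theorem cycleOf_mul_self_comm (σ : Perm V) (v : V) : Commute (σ.cycleOf v) σ := by
  ext y
  simp only [Perm.mul_apply, cycleOf_apply, sameCycle_apply_right]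
  split_ifs <;> rfl

theorem flipPerm_inv (σ : Perm V) (v : V) : (flipPerm σ v)⁻¹ = flipPerm σ⁻¹ v := by
  have hinv : flipPerm σ⁻¹ v = σ⁻¹ * (σ.cycleOf v)⁻¹⁻¹ * (σ.cycleOf v)⁻¹⁻¹ := by
    rw [cycleOf_inv, flipPerm]
    congr!
  rw [hinv, flipPerm]
  have h := (cycleOf_mul_self_comm σ v).inv_right
  simp only [mul_inv_rev, inv_inv]
  rw [← mul_assoc, mul_assoc, h.eq, ← mul_assoc, h.eq]

theorem longPart_flipPerm (σ : Perm V) (v : V) : longPart (flipPerm σ v) = longPart σ := by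
  ext y
  simp only [longPart, Finset.mem_filter, Finset.mem_univ, true_and]
  rw [flipPerm_inv, flipPerm_apply, flipPerm_apply]
  simp only [sameCycle_inv, inv_inv]
  split_ifs
  · exact ne_comm
  · rfl

theorem cycleOf_flipPerm (σ : Perm V) (v : V) :
    (flipPerm σ v).cycleOf v = (σ.cycleOf v)⁻¹ := by
  have hc : Commute (σ.cycleOf v)⁻¹ (σ * (σ.cycleOf v)⁻¹) :=
    ((cycleOf_mul_self_comm σ v).inv_left).mul_right (Commute.refl _)
  have hv : (σ * (σ.cycleOf v)⁻¹) v = v := by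
    rw [cycleOf_inv]
    simp
  have h : flipPerm σ v = (σ.cycleOf v)⁻¹ * (σ * (σ.cycleOf v)⁻¹) := by
    rw [hc.eq]; rfl
  rw [h, cycleOf_mul_of_apply_right_eq_self hc v hv, ← cycleOf_inv]
  congr 1
  by_cases hx : σ v = v
  · rw [(cycleOf_eq_one_iff σ).2 hx, cycleOf_one]
  · exact (isCycle_cycleOf σ hx).cycleOf_eq (by rwa [cycleOf_apply_self])

theorem flipPerm_flipPerm (σ : Perm V) (v : V) : flipPerm (flipPerm σ v) v = σ := by
  have h : flipPerm (flipPerm σ v) v =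
      flipPerm σ v * ((flipPerm σ v).cycleOf v)⁻¹ * ((flipPerm σ v).cycleOf v)⁻¹ := rfl
  rw [h, cycleOf_flipPerm]
  simp [flipPerm]

theorem sign_flipPerm (σ : Perm V) (v : V) : sign (flipPerm σ v) = sign σ := by
  simp [flipPerm, mul_assoc, Int.units_mul_self]

end Flip

/-! ### Cancellation of the permutations with a long orbit -/

section Cycle

variable {V : Type*}

/-- The walk `x, σ x, …, σ^n x = y`. -/
theorem exists_walk_iterate (U : SimpleGraph V) (A : Matrix V V ℂ) (σ : V → V) (n : ℕ) :
    ∀ x y, (∀ j, U.Adj (σ^[j] x) (σ^[j + 1] x)) → σ^[n] x = y →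
      ∃ p : U.Walk x y, p.support = List.iterate σ x (n + 1) ∧
        walkWeight A p = ((List.iterate σ x n).map fun y => A y (σ y)).prod := by
  induction n with
  | zero =>
    rintro x y - rfl
    exact ⟨.nil, by simp [List.iterate], by simp [walkWeight, List.iterate]⟩
  | succ n ih =>
    intro x y h hy
    obtain ⟨p, hp, hw⟩ := ih (σ x) y (fun j => h (j + 1)) hy
    have h0 : U.Adj x (σ x) := h 0
    refine ⟨.cons h0 p, ?_, ?_⟩
    · rw [SimpleGraph.Walk.support_cons, hp]; rfl
    · have : walkWeight A (.cons h0 p) = A x (σ x) * walkWeight A p := by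
        simp [walkWeight]
      rw [this, hw]; rfl

variable [Fintype V] [DecidableEq V]

/-- The product of the entries of `A` over an orbit of length at least three vanishes or is the
weight of a cycle, hence is purely imaginary. -/
theorem conj_orbit_prod {U : SimpleGraph V} {A : Matrix V V ℂ} (hA : ThreeColored U A)
    (hcyc : ∀ (u : V) (c : U.Walk u u), c.IsCycle →
      walkWeight A c ∈ ({Complex.I, -Complex.I} : Set ℂ))
    (σ : Perm V) (v : V) (hv : v ∈ longPart σ) :
    (starRingEnd ℂ) (∏ i ∈ (σ.cycleOf v).support, A i (σ i))
      = -∏ i ∈ (σ.cycleOf v).support, A i (σ i) := by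
  have hv2 : σ (σ v) ≠ v := by
    simp only [longPart, Finset.mem_filter, Finset.mem_univ, true_and] at hv
    intro h
    exact hv (by rw [Perm.eq_inv_iff_eq, h])
  have hv1 : σ v ≠ v := fun h => hv2 (by rw [h, h])
  by_cases hadj : ∀ j, U.Adj (σ^[j] v) (σ^[j + 1] v)
  swap
  · push Not at hadj
    obtain ⟨j, hj⟩ := hadj
    have hz : A (σ^[j] v) (σ (σ^[j] v)) = 0 := by
      rw [Function.iterate_succ_apply'] at hj
      by_cases he : σ^[j] v = σ (σ^[j] v)
      · rw [← he]; exact hA.2.1 _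
      · exact hA.2.2.2 _ _ he hj
    have hm : σ^[j] v ∈ (σ.cycleOf v).support := by
      rw [mem_support_cycleOf_iff' hv1, ← Perm.coe_pow]
      exact ⟨j, rfl⟩
    rw [Finset.prod_eq_zero hm hz]; simp
  set k := (σ.cycleOf v).support.card with hk
  have hkv : σ^[k] v = v := by
    have := pow_mod_card_support_cycleOf_self_apply σ k v
    rw [← hk, Nat.mod_self] at this
    rw [← Perm.coe_pow, ← this]; rfl
  have hk2 : 2 ≤ k := two_le_card_support_cycleOf_iff.2 hv1
  have hk3 : 3 ≤ k := by
    rcases hk2.lt_or_eq with h | h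
    · exact h
    · rw [← h] at hkv
      exact absurd hkv hv2
  obtain ⟨p, hp, hw⟩ := exists_walk_iterate U A σ k v v hadj hkv
  have hlist : ((List.iterate σ v k).map fun y => A y (σ y)).prod
      = ∏ i ∈ (σ.cycleOf v).support, A i (σ i) := by
    have h1 : List.iterate σ v k = σ.toList v := rfl
    rw [h1, ← List.prod_toFinset _ (nodup_toList σ v)]
    congr 1
    ext y
    rw [List.mem_toFinset, mem_toList_iff, mem_support_cycleOf_iff]
  have hc : p.IsCycle := by
    rw [SimpleGraph.Walk.isCycle_iff_isPath_tail_and_le_length]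
    have hlen : p.length = k := by
      have := p.length_support
      rw [hp, List.length_iterate] at this
      omega
    refine ⟨?_, by simpa [hlen] using hk3⟩
    rw [SimpleGraph.Walk.isPath_def, SimpleGraph.Walk.support_tail_of_not_nil, hp]
    · have h1 : (List.iterate σ v (k + 1)).tail = σ.toList (σ v) := by
        rw [Equiv.Perm.toList, cycleOf_self_apply]; rfl
      rw [h1]
      exact nodup_toList _ _
    · rw [← SimpleGraph.Walk.length_eq_zero_iff]
      omega
  have hmem := hcyc _ _ hc
  rw [hw, hlist] at hmem
  rcases hmem with h | h <;> rw [h] <;> simp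

theorem prod_flipPerm {U : SimpleGraph V} {A : Matrix V V ℂ} (hA : ThreeColored U A)
    (hcyc : ∀ (u : V) (c : U.Walk u u), c.IsCycle →
      walkWeight A c ∈ ({Complex.I, -Complex.I} : Set ℂ))
    (σ : Perm V) (v : V) (hv : v ∈ longPart σ) :
    ∏ i, A (flipPerm σ v i) i = -∏ i, A (σ i) i := by
  have hv1 : σ v ≠ v := by
    simp only [longPart, Finset.mem_filter, Finset.mem_univ, true_and] at hv
    intro h
    exact hv (by rw [Perm.eq_inv_iff_eq, h, h])
  rw [← Finset.prod_mul_prod_compl (σ.cycleOf v).support fun i => A (flipPerm σ v i) i,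
    ← Finset.prod_mul_prod_compl (σ.cycleOf v).support fun i => A (σ i) i]
  have h1 : ∏ i ∈ (σ.cycleOf v).supportᶜ, A (flipPerm σ v i) i
      = ∏ i ∈ (σ.cycleOf v).supportᶜ, A (σ i) i := by
    refine Finset.prod_congr rfl fun i hi => ?_
    rw [Finset.mem_compl, mem_support_cycleOf_iff' hv1] at hi
    rw [flipPerm_apply, if_neg hi]
  have h2 : ∏ i ∈ (σ.cycleOf v).support, A (flipPerm σ v i) i
      = ∏ i ∈ (σ.cycleOf v).support, A i (σ i) := by
    refine Finset.prod_equiv σ⁻¹ (fun i => ?_) fun i hi => ?_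
    · rw [mem_support_cycleOf_iff' hv1, mem_support_cycleOf_iff' hv1]
      exact sameCycle_symm_apply_right.symm
    · rw [mem_support_cycleOf_iff' hv1] at hi
      rw [flipPerm_apply, if_pos hi]
      congr 1
      exact (σ.apply_symm_apply i).symm
  have h3 : ∏ i ∈ (σ.cycleOf v).support, A (σ i) i
      = (starRingEnd ℂ) (∏ i ∈ (σ.cycleOf v).support, A i (σ i)) := by
    rw [map_prod]
    exact Finset.prod_congr rfl fun i _ => (hA.1.apply _ _).symm
  rw [h1, h2, h3, conj_orbit_prod hA hcyc σ v hv]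
  ring

/-- The permutations with an orbit of length at least three contribute nothing to `det A`. -/
theorem sum_longPart_eq_zero {U : SimpleGraph V} {A : Matrix V V ℂ} (hA : ThreeColored U A)
    (hcyc : ∀ (u : V) (c : U.Walk u u), c.IsCycle →
      walkWeight A c ∈ ({Complex.I, -Complex.I} : Set ℂ)) :
    ∑ σ : Perm V with (longPart σ).Nonempty, ((sign σ : ℤ) : ℂ) * ∏ i, A (σ i) i = 0 := by
  -- the chosen vertex depends only on the set `longPart σ`, which reversal preserves
  have hchoose : ∀ (s t : Finset V) (_ : s = t) (hs : ∃ a, a ∈ s) (ht : ∃ a, a ∈ t),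
      hs.choose = ht.choose := by
    rintro s t rfl hs ht; rfl
  have hmem : ∀ σ ∈ Finset.univ.filter fun σ : Perm V => (longPart σ).Nonempty,
      ∃ a, a ∈ longPart σ := fun σ h => (Finset.mem_filter.1 h).2
  have hneg : ∀ σ (h : σ ∈ Finset.univ.filter fun σ : Perm V => (longPart σ).Nonempty),
      ((sign σ : ℤ) : ℂ) * ∏ i, A (σ i) i
        + ((sign (flipPerm σ (hmem σ h).choose) : ℤ) : ℂ)
          * ∏ i, A (flipPerm σ (hmem σ h).choose i) i = 0 := by
    intro σ h
    rw [prod_flipPerm hA hcyc σ _ (hmem σ h).choose_spec, sign_flipPerm]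
    ring
  refine Finset.sum_involution (fun σ h => flipPerm σ (hmem σ h).choose) hneg ?_ ?_ ?_
  · intro σ h hne heq
    have := hneg σ h
    rw [heq, ← two_mul] at this
    exact hne ((mul_eq_zero.1 this).resolve_left two_ne_zero)
  · intro σ h
    rw [Finset.mem_filter]
    exact ⟨Finset.mem_univ _, by rw [longPart_flipPerm]; exact hmem σ h⟩
  · intro σ h
    rw [hchoose _ _ (longPart_flipPerm σ (hmem σ h).choose) _ (hmem σ h), flipPerm_flipPerm]

end Cycle

/-! ### Perfect matchings as involutions -/

section Matching

variable {V : Type*} [DecidableEq V]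

theorem IsPM.existsUnique {G : SimpleGraph V} {M : Finset (Sym2 V)} (hM : IsPM G M) (v : V) :
    ∃! w, s(v, w) ∈ M := by
  obtain ⟨e, he⟩ := Finset.card_eq_one.1 (hM.2 v)
  have hee : e ∈ M.filter fun e => v ∈ e := by simp [he]
  obtain ⟨heM, w, rfl⟩ := Finset.mem_filter.1 hee
  refine ⟨w, heM, fun z hz => ?_⟩
  have : s(v, z) ∈ M.filter fun e => v ∈ e := by simp [hz]
  rw [he, Finset.mem_singleton] at this
  exact Sym2.congr_right.1 this

/-- Perfect matchings correspond to involutions moving every vertex to a neighbour. -/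
theorem hasPM_iff [Fintype V] (G : SimpleGraph V) :
    HasPM G ↔ ∃ σ : Perm V, (∀ v, σ (σ v) = v) ∧ ∀ v, G.Adj (σ v) v := by
  constructor
  · rintro ⟨M, hM⟩
    choose f hf hu using fun v => hM.existsUnique v
    have hinv : Function.Involutive f := fun v =>
      (hu (f v) v (by simpa only [Sym2.eq_swap] using hf v)).symm
    refine ⟨hinv.toPerm, hinv, fun v => ?_⟩
    exact (hM.1 _ (hf v) : G.Adj v (f v)).symm
  · rintro ⟨σ, hinv, hadj⟩
    refine ⟨Finset.univ.image fun v => s(v, σ v), ?_, fun v => ?_⟩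
    · intro e he
      obtain ⟨v, -, rfl⟩ := Finset.mem_image.1 he
      exact (hadj v).symm
    · rw [Finset.card_eq_one]
      refine ⟨s(v, σ v), ?_⟩
      ext e
      simp only [Finset.mem_filter, Finset.mem_image, Finset.mem_univ, true_and,
        Finset.mem_singleton]
      constructor
      · rintro ⟨⟨w, rfl⟩, hw⟩
        rcases Sym2.mem_iff.1 hw with rfl | rfl
        · rfl
        · rw [hinv, Sym2.eq_swap]
      · rintro rfl
        exact ⟨⟨v, rfl⟩, Sym2.mem_mk_left _ _⟩

end Matching

/-! ### Terms of involutions in the determinant -/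

section Involutions

variable {V : Type*}

theorem entry_mul {U : SimpleGraph V} {A : Matrix V V ℂ} (hA : ThreeColored U A) {u v : V}
    (h : U.Adj u v) : A u v * A v u = 1 := by
  rw [← hA.1.apply v u]
  have := hA.2.2.1 u v h
  simp only [Set.mem_insert_iff, Set.mem_singleton_iff] at this
  rcases this with h | h | h | h <;> rw [h] <;> simp

variable [Fintype V] [DecidableEq V]

/-- A fixed-point-free involution is a product of `n / 2` transpositions. -/
theorem sign_of_fixedPointFree (σ : Perm V) (h2 : ∀ v, σ (σ v) = v) (hne : ∀ v, σ v ≠ v) :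
    sign σ = (-1) ^ (Fintype.card V / 2) := by
  have hord : orderOf σ ∣ 2 := orderOf_dvd_of_pow_eq_one (by ext v; simp [pow_two, h2])
  have hrep : σ.cycleType = Multiset.replicate σ.cycleType.card 2 := by
    refine Multiset.eq_replicate.2 ⟨rfl, fun m hm => ?_⟩
    exact le_antisymm (Nat.le_of_dvd two_pos ((dvd_of_mem_cycleType hm).trans hord))
      (two_le_of_mem_cycleType hm)
  have hfix : Fintype.card (Function.fixedPoints σ) = 0 := by
    rw [Fintype.card_eq_zero_iff]
    exact ⟨fun x => hne x.1 x.2⟩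
  rw [sign_of_cycleType_eq_replicate two_pos hrep, hfix]
  simp

theorem involution_term {U : SimpleGraph V} {A : Matrix V V ℂ} (hA : ThreeColored U A)
    (σ : Perm V) (h2 : ∀ v, σ (σ v) = v) [Decidable (∀ v, U.Adj (σ v) v)] :
    ((sign σ : ℤ) : ℂ) * ∏ i, A (σ i) i
      = if ∀ v, U.Adj (σ v) v then (-1) ^ (Fintype.card V / 2) else 0 := by
  split_ifs with hadj
  · have hp : ∏ i, A (σ i) i = 1 := by
      refine Finset.prod_involution (fun i _ => σ i) (fun i _ => ?_) (fun i _ _ => (hadj i).ne)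
        (fun _ _ => Finset.mem_univ _) fun i _ => h2 i
      rw [h2]
      exact entry_mul hA (hadj i)
    rw [hp, sign_of_fixedPointFree σ h2 fun v => (hadj v).ne]
    simp
  · push Not at hadj
    obtain ⟨v, hv⟩ := hadj
    have hz : A (σ v) v = 0 := by
      by_cases he : σ v = v
      · rw [he]; exact hA.2.1 _
      · exact hA.2.2.2 _ _ he hv
    rw [Finset.prod_eq_zero (f := fun i => A (σ i) i) (Finset.mem_univ v) hz, mul_zero]

end Involutions

/-- A connected unicyclic 3-colored digraph whose unique cycle has
weight `±i` is non-singular iff it has a perfect matching. -/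
theorem stmt4 {V : Type*} [Fintype V] [DecidableEq V] (U : SimpleGraph V)
    (A : Matrix V V ℂ) (hA : ThreeColored U A) (hU : Unicyclic V U)
    (hcyc : ∀ (u : V) (c : U.Walk u u), c.IsCycle →
      walkWeight A c ∈ ({Complex.I, -Complex.I} : Set ℂ)) :
    A.det ≠ 0 ↔ HasPM U := by
  classical
  have hinv : ∀ σ : Perm V, ¬ (longPart σ).Nonempty ↔ ∀ v, σ (σ v) = v := by
    intro σ
    rw [Finset.not_nonempty_iff_eq_empty, longPart, Finset.filter_eq_empty_iff]
    simp only [Finset.mem_univ, true_imp_iff, not_not]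
    exact forall_congr' fun v => Perm.eq_inv_iff_eq
  have hdet : A.det = ((Finset.univ.filter fun σ : Perm V =>
      (∀ v, σ (σ v) = v) ∧ ∀ v, U.Adj (σ v) v).card : ℂ) * (-1) ^ (Fintype.card V / 2) := by
    rw [Matrix.det_apply', ← Finset.sum_filter_add_sum_filter_not Finset.univ
      fun σ : Perm V => (longPart σ).Nonempty, sum_longPart_eq_zero hA hcyc, zero_add]
    simp only [hinv]
    rw [Finset.sum_congr rfl fun σ hσ => involution_term hA σ (Finset.mem_filter.1 hσ).2,
      ← Finset.sum_filter, Finset.filter_filter, Finset.sum_const, nsmul_eq_mul]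
  rw [hdet, hasPM_iff, mul_ne_zero_iff_right (pow_ne_zero _ (by norm_num)), Nat.cast_ne_zero,
    Finset.card_ne_zero]
  simp [Finset.Nonempty]
end

section
/- Let (B, A) be a 3-colored digraph where B is a connected bicyclic graph such that every cycle of B, with at most one exception, has weight in {i, −i}, and suppose B has no perfect matching. Then det A ≠ 0 if and only if B contains an independent cycle Γ with w(Γ) ∈ {1, −1}. -/
/-!
Expand `det A` over permutations `σ`. A nonzero term belongs to a `σ` all of whose steps
`x → σ x` are edges; its orbits of size two contribute `A x y * A y x = 1`, and its longer orbits
are cycles of the graph, contributing their weights. Reversing an orbit conjugates its weight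
(`A` is Hermitian) and keeps the sign of `σ`, so the terms of permutations having an orbit of
imaginary weight cancel in pairs: `det_eq_sum_real`. The pairing reverses an orbit chosen from the
set of vertices on imaginary orbits, which the reversal does not change.

A surviving `σ` has an orbit of size at least three, since otherwise it would be a perfect matching
(`exists_long`), and every such orbit has weight `±1`, so it traces the unique exceptional cycle
(`edges_eq_of_long`). Hence any two surviving terms have the same long orbit up to direction and
fixed-point-free involutions elsewhere, and they are equal (`detTerm_eq`): both the sign and the
weight are determined by the exceptional cycle and the number of vertices. So `det A` is a nonzero
multiple of the number of surviving permutations (`det_ne_zero_iff`). Such a permutation is exactly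
a directed cycle of weight `±1` together with a perfect matching of the remaining vertices
(`exists_cycle_of_orbit`, `exists_perm_of_indep_cycle`).
-/

open SimpleGraph

set_option linter.unusedSectionVars false

/-! ### Orbits of a permutation -/

section Orbits

variable {V : Type*} [Fintype V] [DecidableEq V]

/-- The orbit of `v` under the permutation `σ`, as a finset. -/
def orb (σ : Equiv.Perm V) (v : V) : Finset V :=
  Finset.univ.filter (fun x => σ.SameCycle v x)

/-- The weight of the orbit of `v`: the product of the entries `A x (σ x)` over it. -/
def orbWeight (A : Matrix V V ℂ) (σ : Equiv.Perm V) (v : V) : ℂ :=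
  ∏ x ∈ orb σ v, A x (σ x)

lemma mem_orb {σ : Equiv.Perm V} {v x : V} : x ∈ orb σ v ↔ σ.SameCycle v x := by
  simp [orb]

lemma orb_eq_of_sameCycle {σ : Equiv.Perm V} {v w : V} (h : σ.SameCycle v w) :
    orb σ v = orb σ w := by
  ext x
  rw [mem_orb, mem_orb]
  exact ⟨fun h' => h.symm.trans h', fun h' => h.trans h'⟩

/-- A predicate which holds at `v` and is preserved by `σ` holds on the whole orbit of `v`;
by finiteness, forward steps suffice. -/
lemma sameCycle_induction {σ : Equiv.Perm V} {p : V → Prop} {v x : V} (h : σ.SameCycle v x)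
    (hv : p v) (hs : ∀ y, p y → p (σ y)) : p x := by
  obtain ⟨n, rfl⟩ := h.exists_nat_pow_eq
  clear h
  induction n with
  | zero => simpa using hv
  | succ n ih => rw [pow_succ', Equiv.Perm.mul_apply]; exact hs _ ih

lemma sameCycle_of_step {σ τ : Equiv.Perm V} (h : ∀ z, τ.SameCycle z (σ z)) {x y : V}
    (hxy : σ.SameCycle x y) : τ.SameCycle x y :=
  sameCycle_induction (p := fun y => τ.SameCycle x y) hxy (Equiv.Perm.SameCycle.refl _ _)
    (fun y hy => hy.trans (h y))

/-! ### Reversing one orbit -/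

/-- The permutation obtained from `σ` by reversing the orbit of `v` and leaving every other
orbit alone. -/
def revOrb (σ : Equiv.Perm V) (v : V) : Equiv.Perm V :=
  σ * (σ.cycleOf v)⁻¹ * (σ.cycleOf v)⁻¹

lemma revOrb_apply_of_mem {σ : Equiv.Perm V} {v x : V} (h : σ.SameCycle v x) :
    revOrb σ v x = σ⁻¹ x := by
  have h1 : (σ.cycleOf v)⁻¹ x = σ⁻¹ x := by
    rw [Equiv.Perm.cycleOf_inv]
    exact (Equiv.Perm.sameCycle_inv.2 h).cycleOf_apply
  have h2 : (σ.cycleOf v)⁻¹ (σ⁻¹ x) = σ⁻¹ (σ⁻¹ x) := by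
    rw [Equiv.Perm.cycleOf_inv]
    refine Equiv.Perm.SameCycle.cycleOf_apply (Equiv.Perm.sameCycle_inv.2 ?_)
    exact Equiv.Perm.sameCycle_symm_apply_right.2 h
  simp only [revOrb, Equiv.Perm.mul_apply]
  rw [h1, h2]
  simp

lemma revOrb_apply_of_not {σ : Equiv.Perm V} {v x : V} (h : ¬ σ.SameCycle v x) :
    revOrb σ v x = σ x := by
  have h1 : (σ.cycleOf v)⁻¹ x = x := by
    rw [Equiv.Perm.cycleOf_inv]
    exact Equiv.Perm.cycleOf_apply_of_not_sameCycle (fun h' => h (Equiv.Perm.sameCycle_inv.1 h'))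
  simp only [revOrb, Equiv.Perm.mul_apply]
  rw [h1, h1]

lemma sign_revOrb (σ : Equiv.Perm V) (v : V) :
    Equiv.Perm.sign (revOrb σ v) = Equiv.Perm.sign σ := by
  simp [revOrb, mul_assoc]

lemma revOrb_apply_apply {σ : Equiv.Perm V} {v x : V} (h : σ.SameCycle v x) :
    revOrb σ v (σ x) = x := by
  rw [revOrb_apply_of_mem (Equiv.Perm.sameCycle_apply_right.2 h)]
  simp

lemma sameCycle_revOrb {σ : Equiv.Perm V} {v x y : V} :
    (revOrb σ v).SameCycle x y ↔ σ.SameCycle x y := by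
  constructor
  · apply sameCycle_of_step
    intro z
    by_cases hz : σ.SameCycle v z
    · rw [revOrb_apply_of_mem hz]
      exact Equiv.Perm.sameCycle_symm_apply_right.2 (Equiv.Perm.SameCycle.refl _ _)
    · rw [revOrb_apply_of_not hz]
      exact Equiv.Perm.sameCycle_apply_right.2 (Equiv.Perm.SameCycle.refl _ _)
  · apply sameCycle_of_step
    intro z
    by_cases hz : σ.SameCycle v z
    · have := Equiv.Perm.SameCycle.refl (revOrb σ v) (σ z)
      rw [← Equiv.Perm.sameCycle_apply_left, revOrb_apply_apply hz] at this
      exact this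
    · have := Equiv.Perm.SameCycle.refl (revOrb σ v) z
      rw [← Equiv.Perm.sameCycle_apply_right, revOrb_apply_of_not hz] at this
      exact this

lemma orb_revOrb (σ : Equiv.Perm V) (v x : V) : orb (revOrb σ v) x = orb σ x := by
  ext y
  rw [mem_orb, mem_orb, sameCycle_revOrb]

lemma revOrb_revOrb (σ : Equiv.Perm V) (v : V) : revOrb (revOrb σ v) v = σ := by
  ext x
  by_cases hx : σ.SameCycle v x
  · rw [revOrb_apply_of_mem (sameCycle_revOrb.2 hx), Equiv.Perm.inv_eq_iff_eq,
      revOrb_apply_apply hx]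
  · rw [revOrb_apply_of_not (fun h => hx (sameCycle_revOrb.1 h)), revOrb_apply_of_not hx]

lemma prod_orb_shift (σ : Equiv.Perm V) (v : V) (f : V → ℂ) :
    ∏ x ∈ orb σ v, f (σ x) = ∏ x ∈ orb σ v, f x := by
  refine Finset.prod_bij (fun x _ => σ x) ?_ (fun a _ b _ h => σ.injective h) ?_ (fun _ _ => rfl)
  · intro x hx
    exact mem_orb.2 (Equiv.Perm.sameCycle_apply_right.2 (mem_orb.1 hx))
  · intro y hy
    exact ⟨σ⁻¹ y, mem_orb.2 (Equiv.Perm.sameCycle_symm_apply_right.2 (mem_orb.1 hy)), by simp⟩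

lemma star_orbWeight {A : Matrix V V ℂ} (hA : A.IsHermitian) (σ : Equiv.Perm V) (v : V) :
    star (orbWeight A σ v) = ∏ x ∈ orb σ v, A x (σ⁻¹ x) := by
  rw [← prod_orb_shift, orbWeight, star_prod]
  refine Finset.prod_congr rfl (fun x _ => ?_)
  rw [hA.apply]
  simp

lemma orbWeight_revOrb_self {A : Matrix V V ℂ} (hA : A.IsHermitian) (σ : Equiv.Perm V) (v x : V)
    (h : σ.SameCycle v x) : orbWeight A (revOrb σ v) x = star (orbWeight A σ x) := by
  rw [star_orbWeight hA, orbWeight, orb_revOrb]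
  refine Finset.prod_congr rfl (fun y hy => ?_)
  rw [revOrb_apply_of_mem (h.trans (mem_orb.1 hy))]

lemma orbWeight_revOrb_of_not (A : Matrix V V ℂ) (σ : Equiv.Perm V) (v x : V)
    (h : ¬ σ.SameCycle v x) : orbWeight A (revOrb σ v) x = orbWeight A σ x := by
  rw [orbWeight, orbWeight, orb_revOrb]
  refine Finset.prod_congr rfl (fun y hy => ?_)
  rw [revOrb_apply_of_not (fun h' => h (h'.trans (mem_orb.1 hy).symm))]

/-- The set of vertices whose orbit has purely imaginary (possibly zero) weight. -/
def imagSet (A : Matrix V V ℂ) (σ : Equiv.Perm V) : Set V :=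
  {v | star (orbWeight A σ v) = - orbWeight A σ v}

lemma imagSet_revOrb {A : Matrix V V ℂ} (hA : A.IsHermitian) {σ : Equiv.Perm V} {v : V}
    (hv : v ∈ imagSet A σ) : imagSet A (revOrb σ v) = imagSet A σ := by
  ext x
  by_cases hx : σ.SameCycle v x
  · have : x ∈ imagSet A σ := by
      simpa only [imagSet, orbWeight, Set.mem_ofPred_eq, orb_eq_of_sameCycle hx] using hv
    simp only [imagSet, Set.mem_ofPred_eq] at this ⊢
    rw [orbWeight_revOrb_self hA σ v x hx, this]
    simp [this]
  · simp only [imagSet, Set.mem_ofPred_eq]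
    rw [orbWeight_revOrb_of_not A σ v x hx]

/-- The term of the Leibniz expansion of `det Aᵀ` belonging to `σ`. -/
def detTerm (A : Matrix V V ℂ) (σ : Equiv.Perm V) : ℂ :=
  ((Equiv.Perm.sign σ : ℤ) : ℂ) * ∏ x, A x (σ x)

lemma det_eq_sum_detTerm (A : Matrix V V ℂ) : A.det = ∑ σ, detTerm A σ := by
  rw [← Matrix.det_transpose, Matrix.det_apply']
  rfl

lemma detTerm_split (A : Matrix V V ℂ) (σ : Equiv.Perm V) (v : V) :
    detTerm A σ = ((Equiv.Perm.sign σ : ℤ) : ℂ) *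
      (orbWeight A σ v * ∏ x ∈ (orb σ v)ᶜ, A x (σ x)) := by
  rw [detTerm, orbWeight, Finset.prod_mul_prod_compl]

/-- Reversing an orbit of imaginary weight changes the sign of the Leibniz term. -/
lemma detTerm_revOrb {A : Matrix V V ℂ} (hA : A.IsHermitian) {σ : Equiv.Perm V} {v : V}
    (hv : v ∈ imagSet A σ) : detTerm A (revOrb σ v) = - detTerm A σ := by
  have h1 : ∏ x ∈ (orb σ v)ᶜ, A x (revOrb σ v x) = ∏ x ∈ (orb σ v)ᶜ, A x (σ x) := by
    refine Finset.prod_congr rfl (fun x hx => ?_)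
    rw [revOrb_apply_of_not]
    simpa [mem_orb] using hx
  rw [detTerm_split A _ v, detTerm_split A σ v, sign_revOrb,
    orbWeight_revOrb_self hA σ v v (Equiv.Perm.SameCycle.refl _ _), orb_revOrb, h1,
    show star (orbWeight A σ v) = - orbWeight A σ v from hv]
  ring

open Classical in
/-- The Leibniz terms of permutations having an orbit of imaginary weight cancel in pairs. -/
lemma det_eq_sum_real {A : Matrix V V ℂ} (hA : A.IsHermitian) :
    A.det = ∑ σ ∈ Finset.univ.filter (fun σ => ¬ (imagSet A σ).Nonempty), detTerm A σ := by
  rw [det_eq_sum_detTerm,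
    ← Finset.sum_filter_add_sum_filter_not Finset.univ (fun σ => (imagSet A σ).Nonempty)]
  -- The reversed orbit depends only on `imagSet A σ`, which makes the pairing an involution.
  have key : ∀ (σ : Equiv.Perm V) (h : (imagSet A σ).Nonempty)
      (h' : (imagSet A (revOrb σ h.some)).Nonempty), h'.some = h.some := by
    intro σ h h'
    have := imagSet_revOrb hA h.some_mem
    simp only [this]
  have h0 : ∑ σ ∈ Finset.univ.filter (fun σ => (imagSet A σ).Nonempty), detTerm A σ = 0 := by
    have hmem : ∀ (σ : Equiv.Perm V)
        (h : σ ∈ Finset.univ.filter (fun σ => (imagSet A σ).Nonempty)),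
        (imagSet A σ).Nonempty := fun σ h => (Finset.mem_filter.1 h).2
    refine Finset.sum_involution (fun σ h => revOrb σ (hmem σ h).some) ?_ ?_ ?_ ?_
    · intro σ h
      rw [detTerm_revOrb hA (hmem σ h).some_mem]
      ring
    · intro σ h hne heq
      have := detTerm_revOrb hA (hmem σ h).some_mem
      rw [heq] at this
      exact hne (self_eq_neg.1 this)
    · intro σ h
      rw [Finset.mem_filter, imagSet_revOrb hA (hmem σ h).some_mem]
      exact ⟨Finset.mem_univ _, hmem σ h⟩
    · intro σ h
      rw [key σ (hmem σ h), revOrb_revOrb]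
  rw [h0, zero_add]

end Orbits

/-! ### Perfect matchings as fixed-point-free involutions -/

lemma hasPM_of_involutive {W : Type*} [Fintype W] [DecidableEq W] {G : SimpleGraph W} {f : W → W}
    (hf : ∀ x, f (f x) = x) (ha : ∀ x, G.Adj x (f x)) : HasPM G := by
  refine ⟨Finset.univ.image (fun x => s(x, f x)), ?_, ?_⟩
  · intro e he
    obtain ⟨x, -, rfl⟩ := Finset.mem_image.1 he
    exact ha x
  · intro v
    rw [Finset.card_eq_one]
    refine ⟨s(v, f v), ?_⟩
    ext e
    simp only [Finset.mem_filter, Finset.mem_image, Finset.mem_univ, true_and,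
      Finset.mem_singleton]
    constructor
    · rintro ⟨⟨x, rfl⟩, hv⟩
      rcases Sym2.mem_iff.1 hv with rfl | rfl
      · rfl
      · rw [hf, Sym2.eq_swap]
    · rintro rfl
      exact ⟨⟨v, rfl⟩, Sym2.mem_mk_left _ _⟩

lemma exists_involutive_of_hasPM {W : Type*} [DecidableEq W] {G : SimpleGraph W}
    (h : HasPM G) : ∃ f : W → W, (∀ x, f (f x) = x) ∧ ∀ x, G.Adj x (f x) := by
  obtain ⟨M, hM, hc⟩ := h
  have h1 : ∀ v, ∃ w, s(v, w) ∈ M := by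
    intro v
    obtain ⟨e, he⟩ := Finset.card_eq_one.1 (hc v)
    have : e ∈ M.filter (fun e => v ∈ e) := by rw [he]; simp
    obtain ⟨he1, he2⟩ := Finset.mem_filter.1 this
    obtain ⟨w, rfl⟩ := Sym2.mem_iff_exists.1 he2
    exact ⟨w, he1⟩
  choose f hf using h1
  refine ⟨f, fun x => ?_, fun x => hM _ (hf x)⟩
  have h2 := Finset.card_le_one.1 (hc (f x)).le s(f x, f (f x))
    (Finset.mem_filter.2 ⟨hf _, Sym2.mem_mk_left _ _⟩) s(f x, x)
    (Finset.mem_filter.2 ⟨by rw [Sym2.eq_swap]; exact hf x, Sym2.mem_mk_left _ _⟩)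
  exact Sym2.congr_right.1 h2

/-! ### From orbits to cycles of the graph -/

section Walks

variable {V : Type*}

/-- The walk `v, σ v, σ² v, …, σⁿ v`. -/
def iterWalk {G : SimpleGraph V} (σ : V → V) (h : ∀ x, G.Adj x (σ x)) :
    ∀ (n : ℕ) (v : V), G.Walk v (σ^[n] v)
  | 0, _ => Walk.nil
  | n + 1, v => Walk.cons (h v) (iterWalk σ h n (σ v))

lemma support_iterWalk {G : SimpleGraph V} (σ : V → V) (h : ∀ x, G.Adj x (σ x)) (n : ℕ) (v : V) :
    (iterWalk σ h n v).support = List.iterate σ v (n + 1) := by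
  induction n generalizing v with
  | zero => rfl
  | succ n ih =>
    rw [List.iterate, ← ih (σ v)]
    exact Walk.support_cons _ _

lemma edges_iterWalk {G : SimpleGraph V} (σ : V → V) (h : ∀ x, G.Adj x (σ x)) (n : ℕ) (v : V) :
    (iterWalk σ h n v).edges = (List.iterate σ v n).map (fun x => s(x, σ x)) := by
  induction n generalizing v with
  | zero => rfl
  | succ n ih =>
    rw [List.iterate, List.map_cons, ← ih (σ v)]
    exact Walk.edges_cons _ _

lemma weight_iterWalk {G : SimpleGraph V} (A : Matrix V V ℂ) (σ : V → V)
    (h : ∀ x, G.Adj x (σ x)) (n : ℕ) (v : V) :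
    walkWeight A (iterWalk σ h n v) = ((List.iterate σ v n).map (fun x => A x (σ x))).prod := by
  induction n generalizing v with
  | zero => rfl
  | succ n ih =>
    rw [List.iterate, List.map_cons, List.prod_cons, ← ih (σ v)]
    rfl

lemma weight_copy {G : SimpleGraph V} (A : Matrix V V ℂ) {u v u' v' : V} (p : G.Walk u v)
    (hu : u = u') (hv : v = v') : walkWeight A (p.copy hu hv) = walkWeight A p := by
  subst hu hv
  rfl

variable [Fintype V] [DecidableEq V]

lemma orb_eq_iterate (σ : Equiv.Perm V) (v : V) :
    orb σ v = (List.iterate σ v (Function.minimalPeriod σ v)).toFinset := by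
  ext x
  rw [mem_orb, List.mem_toFinset, List.mem_iterate]
  constructor
  · intro h
    obtain ⟨n, rfl⟩ := h.exists_nat_pow_eq
    have hp : v ∈ Function.periodicPts σ :=
      Function.Injective.mem_periodicPts σ.injective v
    refine ⟨n % Function.minimalPeriod σ v,
      Nat.mod_lt _ (Function.minimalPeriod_pos_of_mem_periodicPts hp), ?_⟩
    rw [Function.iterate_mod_minimalPeriod_eq, Equiv.Perm.iterate_eq_pow]
  · rintro ⟨n, -, rfl⟩
    rw [Equiv.Perm.iterate_eq_pow]
    exact ⟨n, by simp⟩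

lemma nodup_iterate (σ : Equiv.Perm V) (v : V) :
    (List.iterate σ v (Function.minimalPeriod σ v)).Nodup := by
  rw [← List.range_map_iterate]
  refine List.Nodup.map_on ?_ List.nodup_range
  intro a ha b hb hab
  exact Function.iterate_injOn_Iio_minimalPeriod (List.mem_range.1 ha) (List.mem_range.1 hb) hab

lemma three_le_minimalPeriod {σ : Equiv.Perm V} {v : V} (h : σ (σ v) ≠ v) :
    3 ≤ Function.minimalPeriod σ v := by
  have hp : v ∈ Function.periodicPts σ := Function.Injective.mem_periodicPts σ.injective v
  have h0 := Function.minimalPeriod_pos_of_mem_periodicPts hp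
  have hit := Function.iterate_minimalPeriod (f := σ) (x := v)
  by_contra hlt
  have : Function.minimalPeriod σ v = 1 ∨ Function.minimalPeriod σ v = 2 := by omega
  rcases this with h1 | h1 <;> rw [h1] at hit
  · have hit' : σ v = v := hit
    exact h (by rw [hit', hit'])
  · exact h hit

/-- An orbit with at least three elements, all of whose steps are edges, is a cycle of the
graph. -/
lemma exists_cycle_of_orbit {G : SimpleGraph V} (A : Matrix V V ℂ) (σ : Equiv.Perm V)
    (h : ∀ x, G.Adj x (σ x)) {v : V} (hv : σ (σ v) ≠ v) :
    ∃ c : G.Walk v v, c.IsCycle ∧ walkWeight A c = orbWeight A σ v ∧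
      c.edges.toFinset = (orb σ v).image (fun x => s(x, σ x)) ∧
      ∀ x, x ∈ c.support ↔ σ.SameCycle v x := by
  have hm := three_le_minimalPeriod hv
  have hit := Function.iterate_minimalPeriod (f := σ) (x := v)
  have hnd := nodup_iterate σ v
  have horb := orb_eq_iterate σ v
  have hnd' : (List.iterate σ (σ v) (Function.minimalPeriod σ v)).Nodup := by
    rw [← List.range_map_iterate] at hnd ⊢
    have := hnd.map σ.injective
    rw [List.map_map] at this
    convert this using 2
    ext k
    simp only [Function.comp]
    rw [← Function.iterate_succ_apply, Function.iterate_succ_apply']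
  generalize Function.minimalPeriod σ v = m at *
  have hsup : ((iterWalk σ h m v).copy rfl hit).support = List.iterate σ v (m + 1) := by
    rw [Walk.support_copy, support_iterWalk]
  have hlen : ((iterWalk σ h m v).copy rfl hit).length = m := by
    have := congrArg List.length hsup
    rw [Walk.length_support, List.length_iterate] at this
    omega
  refine ⟨(iterWalk σ h m v).copy rfl hit, ?_, ?_, ?_, ?_⟩
  · rw [Walk.isCycle_iff_isPath_tail_and_le_length]
    refine ⟨?_, by omega⟩
    rw [Walk.isPath_def, Walk.support_tail_of_not_nil, hsup]
    · exact hnd'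
    · rw [← Walk.length_eq_zero_iff]
      omega
  · rw [weight_copy, weight_iterWalk, orbWeight, horb, List.prod_toFinset _ hnd]
  · rw [Walk.edges_copy, edges_iterWalk, horb]
    ext e
    simp
  · intro x
    rw [hsup, ← mem_orb, horb, List.mem_toFinset, List.mem_iterate, List.mem_iterate]
    constructor
    · rintro ⟨k, hk, rfl⟩
      rcases Nat.lt_succ_iff_lt_or_eq.1 hk with hk | rfl
      · exact ⟨k, hk, rfl⟩
      · exact ⟨0, by omega, hit⟩
    · rintro ⟨k, hk, rfl⟩
      exact ⟨k, by omega, rfl⟩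

end Walks

/-! ### Comparing permutations without orbits of imaginary weight -/

section Compare

variable {V : Type*} [Fintype V] [DecidableEq V]

lemma entry_mul_entry {B : SimpleGraph V} {A : Matrix V V ℂ} (hA : ThreeColored B A) {x y : V}
    (h : B.Adj x y) : A x y * A y x = 1 := by
  rw [← hA.1.apply y x]
  rcases hA.2.2.1 x y h with h | h | h | h <;> rw [h] <;> simp

lemma adj_of_entry_ne_zero {B : SimpleGraph V} {A : Matrix V V ℂ} (hA : ThreeColored B A) {x y : V}
    (h : A x y ≠ 0) : B.Adj x y := by
  by_contra hn
  by_cases hxy : x = y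
  · subst hxy
    exact h (hA.2.1 x)
  · exact h (hA.2.2.2 x y hxy hn)

lemma adj_of_detTerm_ne_zero {B : SimpleGraph V} {A : Matrix V V ℂ} (hA : ThreeColored B A)
    {σ : Equiv.Perm V} (h : detTerm A σ ≠ 0) (x : V) : B.Adj x (σ x) :=
  adj_of_entry_ne_zero hA (fun h0 => h (by
    rw [detTerm, Finset.prod_eq_zero (Finset.mem_univ x) h0, mul_zero]))

lemma orbWeight_eq_one_or {B : SimpleGraph V} {A : Matrix V V ℂ} (hA : ThreeColored B A)
    {σ : Equiv.Perm V} (h : ∀ x, B.Adj x (σ x)) {v : V} (hv : v ∉ imagSet A σ) :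
    orbWeight A σ v = 1 ∨ orbWeight A σ v = -1 := by
  have h4 : orbWeight A σ v ^ 4 = 1 := by
    rw [orbWeight, ← Finset.prod_pow]
    refine Finset.prod_eq_one (fun x _ => ?_)
    rcases hA.2.2.1 x _ (h x) with h | h | h | h <;> rw [h]
    · norm_num
    · norm_num
    · exact Complex.I_pow_four
    · rw [Even.neg_pow (by decide)]
      exact Complex.I_pow_four
  have hv' : ¬ star (orbWeight A σ v) = - orbWeight A σ v := hv
  generalize orbWeight A σ v = w at *
  have h5 : ((w - 1) * (w + 1)) * ((w - Complex.I) * (w + Complex.I)) = 0 := by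
    linear_combination h4 + (1 - w ^ 2) * Complex.I_sq
  rcases mul_eq_zero.1 h5 with h5 | h5 <;> rcases mul_eq_zero.1 h5 with h5 | h5
  · exact Or.inl (sub_eq_zero.1 h5)
  · exact Or.inr (eq_neg_of_add_eq_zero_left h5)
  · exact absurd (by rw [sub_eq_zero.1 h5]; simp) hv'
  · exact absurd (by rw [eq_neg_of_add_eq_zero_left h5]; simp) hv'

lemma long_of_sameCycle {σ : Equiv.Perm V} {v x : V} (hv : σ (σ v) ≠ v) (h : σ.SameCycle v x) :
    σ (σ x) ≠ x :=
  sameCycle_induction (p := fun y => σ (σ y) ≠ y) h hv (fun _ hy h' => hy (σ.injective h'))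

/-- If at each point of a long orbit of `σ` the permutation `τ` agrees with `σ` up to direction,
and the directions agree at one point, then they agree on the orbit. -/
lemma agree_on_orbit {σ τ : Equiv.Perm V} {v : V} (hv : σ (σ v) ≠ v)
    (h : ∀ x, σ.SameCycle v x → σ x = τ x ∨ σ x = τ⁻¹ x) (h0 : σ v = τ v) {x : V}
    (hx : σ.SameCycle v x) : σ x = τ x := by
  refine (sameCycle_induction (p := fun y => σ.SameCycle v y ∧ σ y = τ y) hx
    ⟨Equiv.Perm.SameCycle.refl _ _, h0⟩ ?_).2
  rintro y ⟨hy, hy'⟩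
  have hy2 := Equiv.Perm.sameCycle_apply_right.2 hy
  refine ⟨hy2, (h _ hy2).resolve_right (fun h' => long_of_sameCycle hv hy ?_)⟩
  rw [h', hy']
  simp

lemma mem_and_direction_of_edges {σ τ : Equiv.Perm V} {v w : V}
    (h : (orb σ v).image (fun x => s(x, σ x)) = (orb τ w).image (fun x => s(x, τ x)))
    {x : V} (hx : σ.SameCycle v x) : τ.SameCycle w x ∧ (σ x = τ x ∨ σ x = τ⁻¹ x) := by
  have h1 : s(x, σ x) ∈ (orb τ w).image (fun x => s(x, τ x)) := by
    rw [← h]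
    exact Finset.mem_image_of_mem (fun x => s(x, σ x)) (mem_orb.2 hx)
  obtain ⟨y, hy, hyx⟩ := Finset.mem_image.1 h1
  rw [mem_orb] at hy
  rcases Sym2.eq_iff.1 hyx with ⟨rfl, h2⟩ | ⟨h2, h3⟩
  · exact ⟨hy, Or.inl h2.symm⟩
  · rw [← h3]
    refine ⟨Equiv.Perm.sameCycle_apply_right.2 hy, Or.inr ?_⟩
    rw [h3, ← h2, ← h3]
    simp

lemma orb_eq_of_edges {σ τ : Equiv.Perm V} {v w : V}
    (h : (orb σ v).image (fun x => s(x, σ x)) = (orb τ w).image (fun x => s(x, τ x))) :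
    orb σ v = orb τ w := by
  ext x
  rw [mem_orb, mem_orb]
  exact ⟨fun hx => (mem_and_direction_of_edges h hx).1,
    fun hx => (mem_and_direction_of_edges h.symm hx).1⟩

/-- Two long orbits tracing the same edges have the same weight up to conjugation. -/
lemma orbWeight_eq_of_edges {A : Matrix V V ℂ} (hA : A.IsHermitian) {σ τ : Equiv.Perm V} {v w : V}
    (h : (orb σ v).image (fun x => s(x, σ x)) = (orb τ w).image (fun x => s(x, τ x)))
    (hv : σ (σ v) ≠ v) :
    orbWeight A σ v = orbWeight A τ w ∨ orbWeight A σ v = star (orbWeight A τ w) := by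
  have hdir := fun x (hx : σ.SameCycle v x) => (mem_and_direction_of_edges h hx).2
  rcases hdir v (Equiv.Perm.SameCycle.refl _ _) with h0 | h0
  · left
    rw [orbWeight, orbWeight, ← orb_eq_of_edges h]
    exact Finset.prod_congr rfl (fun x hx => by rw [agree_on_orbit hv hdir h0 (mem_orb.1 hx)])
  · right
    rw [star_orbWeight hA, orbWeight, ← orb_eq_of_edges h]
    refine Finset.prod_congr rfl (fun x hx => ?_)
    rw [agree_on_orbit (τ := τ⁻¹) hv (fun y hy => ?_) h0 (mem_orb.1 hx)]
    rw [inv_inv]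
    exact (hdir y hy).symm

/-- The sign of a fixed-point-free permutation all of whose orbits, apart from that of `v`, have
two elements. -/
lemma sign_of_one_long {σ : Equiv.Perm V} {v : V} (hfix : ∀ x, σ x ≠ x)
    (hinv : ∀ x, ¬ σ.SameCycle v x → σ (σ x) = x) :
    Equiv.Perm.sign σ =
      -(-1) ^ (orb σ v).card * (-1) ^ ((orb σ v)ᶜ.card / 2) := by
  have hc : (σ.cycleOf v).IsCycle := Equiv.Perm.isCycle_cycleOf σ (hfix v)
  have hsupp : (σ.cycleOf v).support = orb σ v := by
    ext x
    rw [Equiv.Perm.mem_support_cycleOf_iff, mem_orb, Equiv.Perm.mem_support]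
    exact ⟨fun h => h.1, fun h => ⟨h, hfix _⟩⟩
  have hin : ∀ x, σ.SameCycle v x → ((σ.cycleOf v)⁻¹ * σ) x = x := by
    intro x hx
    rw [Equiv.Perm.mul_apply, Equiv.Perm.inv_eq_iff_eq, hx.cycleOf_apply]
  have hout : ∀ x, ¬ σ.SameCycle v x → ((σ.cycleOf v)⁻¹ * σ) x = σ x := by
    intro x hx
    rw [Equiv.Perm.mul_apply, Equiv.Perm.inv_eq_iff_eq,
      Equiv.Perm.cycleOf_apply_of_not_sameCycle]
    rwa [Equiv.Perm.sameCycle_apply_right]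
  have hsq : ((σ.cycleOf v)⁻¹ * σ) ^ 2 = 1 := by
    ext x
    rw [pow_two, Equiv.Perm.mul_apply, Equiv.Perm.one_apply]
    by_cases hx : σ.SameCycle v x
    · rw [hin x hx, hin x hx]
    · rw [hout x hx, hout, hinv x hx]
      rwa [Equiv.Perm.sameCycle_apply_right]
  have hsupp' : ((σ.cycleOf v)⁻¹ * σ).support = (orb σ v)ᶜ := by
    ext x
    rw [Equiv.Perm.mem_support, Finset.mem_compl, mem_orb]
    by_cases hx : σ.SameCycle v x
    · simp only [hin x hx, hx, ne_eq, not_true_eq_false]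
    · rw [hout x hx]
      exact ⟨fun _ => hx, fun _ => hfix x⟩
  calc Equiv.Perm.sign σ = Equiv.Perm.sign (σ.cycleOf v * ((σ.cycleOf v)⁻¹ * σ)) := by
        rw [mul_inv_cancel_left]
    _ = _ := by
        rw [Equiv.Perm.sign_mul, hc.sign, Equiv.Perm.sign_of_pow_two_eq_one hsq, hsupp, ← hsupp',
          Equiv.Perm.card_fixedPoints, Equiv.Perm.sum_cycleType,
          Nat.sub_sub_self (Finset.card_le_univ _)]

lemma detTerm_of_one_long {B : SimpleGraph V} {A : Matrix V V ℂ} (hA : ThreeColored B A)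
    {σ : Equiv.Perm V} (h : ∀ x, B.Adj x (σ x)) {v : V}
    (hinv : ∀ x, ¬ σ.SameCycle v x → σ (σ x) = x) :
    detTerm A σ = (((-(-1) ^ (orb σ v).card * (-1) ^ ((orb σ v)ᶜ.card / 2) : ℤˣ) : ℤ) : ℂ) *
      orbWeight A σ v := by
  rw [detTerm_split A σ v, sign_of_one_long (fun x => (h x).ne') hinv]
  have : ∏ x ∈ (orb σ v)ᶜ, A x (σ x) = 1 := by
    refine Finset.prod_involution (fun x _ => σ x) ?_ ?_ ?_ ?_
    · intro x hx
      rw [Finset.mem_compl, mem_orb] at hx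
      rw [hinv x hx]
      exact entry_mul_entry hA (h x)
    · intro x _ _
      exact (h x).ne'
    · intro x hx
      rw [Finset.mem_compl, mem_orb] at hx ⊢
      rwa [Equiv.Perm.sameCycle_apply_right]
    · intro x hx
      rw [Finset.mem_compl, mem_orb] at hx
      exact hinv x hx
  rw [this, mul_one]

end Compare

/-! ### From independent cycles to permutations -/

section Converse

variable {V : Type*} [Fintype V] [DecidableEq V]

lemma orbWeight_of_involutive {B : SimpleGraph V} {A : Matrix V V ℂ} (hA : ThreeColored B A)
    {σ : Equiv.Perm V} {x : V} (hadj : B.Adj x (σ x)) (hx : σ (σ x) = x) :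
    orbWeight A σ x = 1 := by
  have : orb σ x = {x, σ x} := by
    ext y
    rw [mem_orb, Finset.mem_insert, Finset.mem_singleton]
    constructor
    · intro h
      refine sameCycle_induction (p := fun y => y = x ∨ y = σ x) h (Or.inl rfl) ?_
      rintro z (rfl | rfl)
      · exact Or.inr rfl
      · exact Or.inl hx
    · rintro (rfl | rfl)
      · exact Equiv.Perm.SameCycle.refl _ _
      · exact Equiv.Perm.sameCycle_apply_right.2 (Equiv.Perm.SameCycle.refl _ _)
  rw [orbWeight, this, Finset.prod_pair hadj.ne, hx]
  exact entry_mul_entry hA hadj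

/-- Rotating along an independent cycle and swapping the ends of the edges of a perfect matching
of the rest gives a permutation whose steps are edges. -/
lemma exists_perm_of_indep_cycle {B : SimpleGraph V} (A : Matrix V V ℂ) {u : V} {c : B.Walk u u}
    (hc : c.IsCycle) (hi : IsIndep B c) :
    ∃ σ : Equiv.Perm V, (∀ x, B.Adj x (σ x)) ∧
      (∀ x, x ∈ c.support → orbWeight A σ x = walkWeight A c) ∧
      ∀ x, x ∉ c.support → σ (σ x) = x := by
  obtain ⟨f, hf, hfa⟩ := exists_involutive_of_hasPM hi
  have hlen := hc.three_le_length
  -- `g` is the matching involution outside the cycle and the identity on it.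
  let g : V → V := fun x => if h : x ∉ c.support then (f ⟨x, h⟩ : V) else x
  have g_out : ∀ x (h : x ∉ c.support), g x = f ⟨x, h⟩ := fun x h => dif_pos h
  have g_in : ∀ x, x ∈ c.support → g x = x := fun x h => dif_neg (not_not.2 h)
  have g_mem : ∀ x, x ∉ c.support → g x ∉ c.support := by
    intro x h
    rw [g_out x h]
    exact (f ⟨x, h⟩).2
  have g_inv : Function.Involutive g := by
    intro x
    by_cases h : x ∈ c.support
    · rw [g_in x h, g_in x h]
    · rw [g_out (g x) (g_mem x h)]
      have : (⟨g x, g_mem x h⟩ : {x : V | x ∉ c.support}) = f ⟨x, h⟩ := Subtype.ext (g_out x h)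
      rw [this, hf]
  set l := c.support.dropLast with hl
  have hnd : l.Nodup := hc.nodup_dropLast_support
  have hll : l.length = c.length := by simp [hl]
  have hget : ∀ i (h : i < l.length), l[i] = c.getVert i := by
    intro i h
    rw [Walk.getVert_eq_support_getElem c (by omega)]
    simp [hl]
  have hmem : ∀ x, x ∈ l ↔ x ∈ c.support := by
    intro x
    refine ⟨fun h => List.dropLast_subset _ h, fun h => ?_⟩
    obtain ⟨i, rfl, hi⟩ := Walk.mem_support_iff_exists_getVert.1 h
    rcases hi.lt_or_eq with hi | rfl
    · rw [← hget i (by omega)]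
      exact List.getElem_mem _
    · rw [Walk.getVert_length]
      have := List.getElem_mem (l := l) (n := 0) (by omega)
      rwa [hget, Walk.getVert_zero] at this
  have hform : ∀ i, i < c.length → l.formPerm (c.getVert i) = c.getVert (i + 1) := by
    intro i hi
    rw [← hget i (by omega), List.formPerm_apply_getElem l hnd, hget]
    rcases Nat.lt_or_ge (i + 1) c.length with h | h
    · rw [hll, Nat.mod_eq_of_lt h]
    · have : i + 1 = c.length := by omega
      rw [hll, this, Nat.mod_self, Walk.getVert_zero, Walk.getVert_length]
  let σ : Equiv.Perm V := l.formPerm * g_inv.toPerm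
  have σ_in : ∀ i, i < c.length → σ (c.getVert i) = c.getVert (i + 1) := by
    intro i hi
    change l.formPerm (g (c.getVert i)) = _
    rw [g_in _ (Walk.getVert_mem_support _ _), hform i hi]
  have σ_out : ∀ x, x ∉ c.support → σ x = g x := by
    intro x hx
    change l.formPerm (g x) = _
    exact List.formPerm_apply_of_notMem (fun h => g_mem x hx ((hmem _).1 h))
  have hvert : ∀ x, x ∈ c.support → ∃ i, i < c.length ∧ c.getVert i = x := by
    intro x hx
    obtain ⟨i, hi, rfl⟩ := List.getElem_of_mem ((hmem x).2 hx)
    exact ⟨i, by omega, (hget i hi).symm⟩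
  have horb : ∀ x, σ.SameCycle u x ↔ x ∈ c.support := by
    intro x
    constructor
    · intro h
      refine sameCycle_induction (p := fun y => y ∈ c.support) h (Walk.start_mem_support c) ?_
      intro y hy
      obtain ⟨i, hi, rfl⟩ := hvert y hy
      rw [σ_in i hi]
      exact Walk.getVert_mem_support _ _
    · intro h
      obtain ⟨i, hi, rfl⟩ := hvert x h
      clear h
      induction i with
      | zero => rw [Walk.getVert_zero]
      | succ i ih =>
        rw [← σ_in i (by omega)]
        exact Equiv.Perm.sameCycle_apply_right.2 (ih (by omega))
  refine ⟨σ, ?_, ?_, ?_⟩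
  · intro x
    by_cases hx : x ∈ c.support
    · obtain ⟨i, hi, rfl⟩ := hvert x hx
      rw [σ_in i hi]
      exact Walk.adj_getVert_succ c hi
    · rw [σ_out x hx, g_out x hx]
      exact hfa ⟨x, hx⟩
  · intro x hx
    have h1 : orb σ x = l.toFinset := by
      rw [← orb_eq_of_sameCycle ((horb x).2 hx)]
      ext y
      rw [mem_orb, horb, List.mem_toFinset, hmem]
    rw [orbWeight, h1, List.prod_toFinset _ hnd, hl, ← Walk.map_fst_darts, List.map_map,
      walkWeight]
    congr 1
    refine List.map_congr_left (fun d hd => ?_)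
    obtain ⟨i, hi, rfl⟩ := List.getElem_of_mem hd
    rw [Walk.length_darts] at hi
    simp only [Function.comp, Walk.darts_getElem_eq_getVert]
    rw [σ_in i hi]
  · intro x hx
    rw [σ_out x hx, σ_out _ (g_mem x hx), g_inv x]

end Converse

/-! ### The determinant criterion -/

section Main

variable {V : Type*} [Fintype V] [DecidableEq V]

/-- Long orbits of permutations without orbits of imaginary weight all trace the exceptional
cycle. -/
lemma edges_eq_of_long {B : SimpleGraph V} {A : Matrix V V ℂ}
    (hexc : ∀ (u v : V) (c : B.Walk u u) (d : B.Walk v v), c.IsCycle → d.IsCycle →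
      walkWeight A c ∉ ({Complex.I, -Complex.I} : Set ℂ) →
      walkWeight A d ∉ ({Complex.I, -Complex.I} : Set ℂ) → SameCycle c d)
    {σ τ : Equiv.Perm V} (hσ : ∀ x, B.Adj x (σ x)) (hτ : ∀ x, B.Adj x (τ x))
    (hσ' : ¬ (imagSet A σ).Nonempty) (hτ' : ¬ (imagSet A τ).Nonempty) {v w : V}
    (hv : σ (σ v) ≠ v) (hw : τ (τ w) ≠ w) :
    (orb σ v).image (fun x => s(x, σ x)) = (orb τ w).image (fun x => s(x, τ x)) := by
  obtain ⟨c, hc, hcw, hce, -⟩ := exists_cycle_of_orbit A σ hσ hv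
  obtain ⟨d, hd, hdw, hde, -⟩ := exists_cycle_of_orbit A τ hτ hw
  have key : ∀ (ρ : Equiv.Perm V) (x : V), ¬ (imagSet A ρ).Nonempty →
      orbWeight A ρ x ∉ ({Complex.I, -Complex.I} : Set ℂ) := by
    intro ρ x h h'
    refine h ⟨x, ?_⟩
    change star (orbWeight A ρ x) = - orbWeight A ρ x
    rcases h' with h' | h' <;> rw [h'] <;> simp
  rw [← hce, ← hde]
  exact hexc v w c d hc hd (hcw ▸ key σ v hσ') (hdw ▸ key τ w hτ')

lemma exists_long {B : SimpleGraph V} (hnpm : ¬ HasPM B) {σ : Equiv.Perm V}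
    (hσ : ∀ x, B.Adj x (σ x)) : ∃ v, σ (σ v) ≠ v := by
  by_contra h
  push Not at h
  exact hnpm (hasPM_of_involutive h hσ)

/-- All nonzero Leibniz terms of permutations without orbits of imaginary weight coincide. -/
lemma detTerm_eq {B : SimpleGraph V} {A : Matrix V V ℂ} (hA : ThreeColored B A)
    (hexc : ∀ (u v : V) (c : B.Walk u u) (d : B.Walk v v), c.IsCycle → d.IsCycle →
      walkWeight A c ∉ ({Complex.I, -Complex.I} : Set ℂ) →
      walkWeight A d ∉ ({Complex.I, -Complex.I} : Set ℂ) → SameCycle c d)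
    (hnpm : ¬ HasPM B) {σ τ : Equiv.Perm V} (hσ0 : detTerm A σ ≠ 0) (hτ0 : detTerm A τ ≠ 0)
    (hσ' : ¬ (imagSet A σ).Nonempty) (hτ' : ¬ (imagSet A τ).Nonempty) :
    detTerm A σ = detTerm A τ := by
  have hσ := adj_of_detTerm_ne_zero hA hσ0
  have hτ := adj_of_detTerm_ne_zero hA hτ0
  obtain ⟨v, hv⟩ := exists_long hnpm hσ
  obtain ⟨w, hw⟩ := exists_long hnpm hτ
  have hinv : ∀ {ρ : Equiv.Perm V} {v : V}, (∀ x, B.Adj x (ρ x)) → ¬ (imagSet A ρ).Nonempty →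
      ρ (ρ v) ≠ v → ∀ x, ¬ ρ.SameCycle v x → ρ (ρ x) = x := by
    intro ρ v hρ hρ' hv x hx
    by_contra hxx
    have := orb_eq_of_edges (edges_eq_of_long hexc hρ hρ hρ' hρ' hv hxx)
    exact hx (mem_orb.1 (this ▸ mem_orb.2 (Equiv.Perm.SameCycle.refl _ _)))
  have he := edges_eq_of_long hexc hσ hτ hσ' hτ' hv hw
  have hwt : orbWeight A σ v = orbWeight A τ w := by
    rcases orbWeight_eq_of_edges hA.1 he hv with h | h
    · exact h
    · rw [h]
      rcases orbWeight_eq_one_or hA hτ (v := w) (fun h' => hτ' ⟨w, h'⟩) with h' | h' <;>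
        rw [h'] <;> simp
  rw [detTerm_of_one_long hA hσ (hinv hσ hσ' hv), detTerm_of_one_long hA hτ (hinv hτ hτ' hw),
    hwt, orb_eq_of_edges he]

/-- The determinant does not vanish iff some Leibniz term survives the pairwise cancellation. -/
lemma det_ne_zero_iff {B : SimpleGraph V} {A : Matrix V V ℂ} (hA : ThreeColored B A)
    (hexc : ∀ (u v : V) (c : B.Walk u u) (d : B.Walk v v), c.IsCycle → d.IsCycle →
      walkWeight A c ∉ ({Complex.I, -Complex.I} : Set ℂ) →
      walkWeight A d ∉ ({Complex.I, -Complex.I} : Set ℂ) → SameCycle c d)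
    (hnpm : ¬ HasPM B) :
    A.det ≠ 0 ↔ ∃ σ : Equiv.Perm V, detTerm A σ ≠ 0 ∧ ¬ (imagSet A σ).Nonempty := by
  classical
  rw [det_eq_sum_real hA.1]
  constructor
  · intro h
    obtain ⟨σ, hσ, hne⟩ := Finset.exists_ne_zero_of_sum_ne_zero h
    exact ⟨σ, hne, (Finset.mem_filter.1 hσ).2⟩
  · rintro ⟨σ, hne, hσ⟩
    rw [← Finset.sum_filter_ne_zero, Finset.sum_congr rfl (g := fun _ => detTerm A σ),
      Finset.sum_const, nsmul_eq_mul]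
    · refine mul_ne_zero (Nat.cast_ne_zero.2 (Finset.card_ne_zero.2 ⟨σ, ?_⟩)) hne
      simp [hσ, hne]
    · intro τ hτ
      rw [Finset.mem_filter, Finset.mem_filter] at hτ
      exact detTerm_eq hA hexc hnpm hτ.2 hne hτ.1.2 hσ

end Main

/-- A connected bicyclic 3-colored digraph, in which every cycle with
at most one exception has weight `±i`, having no perfect matching, is non-singular iff
it contains an independent cycle of weight `±1`. -/
theorem stmt5 {V : Type*} [Fintype V] [DecidableEq V] (B : SimpleGraph V)
    (A : Matrix V V ℂ) (hA : ThreeColored B A) (hB : Bicyclic V B)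
    (hexc : ∀ (u v : V) (c : B.Walk u u) (d : B.Walk v v), c.IsCycle → d.IsCycle →
      walkWeight A c ∉ ({Complex.I, -Complex.I} : Set ℂ) →
      walkWeight A d ∉ ({Complex.I, -Complex.I} : Set ℂ) → SameCycle c d)
    (hnpm : ¬ HasPM B) :
    A.det ≠ 0 ↔ ∃ (u : V) (Γ : B.Walk u u), Γ.IsCycle ∧ IsIndep B Γ ∧
      walkWeight A Γ ∈ ({1, -1} : Set ℂ) := by
  rw [det_ne_zero_iff hA hexc hnpm]
  constructor
  · rintro ⟨σ, hne, hreal⟩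
    have hσ := adj_of_detTerm_ne_zero hA hne
    obtain ⟨v, hv⟩ := exists_long hnpm hσ
    obtain ⟨c, hc, hcw, -, hcs⟩ := exists_cycle_of_orbit A σ hσ hv
    refine ⟨v, c, hc, ?_, ?_⟩
    · have hstep : ∀ x, x ∉ c.support → σ x ∉ c.support := by
        intro x hx
        rwa [hcs, Equiv.Perm.sameCycle_apply_right, ← hcs]
      refine hasPM_of_involutive
        (f := fun x : {x : V | x ∉ c.support} => ⟨σ x, hstep x x.2⟩) ?_ (fun x => hσ x)
      rintro ⟨x, hx⟩
      refine Subtype.ext ?_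
      change σ (σ x) = x
      by_contra hxx
      -- A second long orbit would trace the same edges as that of `v`, hence coincide with it.
      have := orb_eq_of_edges (edges_eq_of_long hexc hσ hσ hreal hreal hv hxx)
      exact hx ((hcs x).2 (mem_orb.1 (this ▸ mem_orb.2 (Equiv.Perm.SameCycle.refl _ _))))
    · rw [hcw]
      exact orbWeight_eq_one_or hA hσ (fun h => hreal ⟨v, h⟩)
  · rintro ⟨u, c, hc, hi, hw⟩
    obtain ⟨σ, hσ, hin, hout⟩ := exists_perm_of_indep_cycle A hc hi
    refine ⟨σ, ?_, ?_⟩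
    · refine mul_ne_zero (by simp) (Finset.prod_ne_zero_iff.2 (fun x _ => ?_))
      exact left_ne_zero_of_mul_eq_one (entry_mul_entry hA (hσ x))
    · rintro ⟨x, hx⟩
      have hx' : star (orbWeight A σ x) = - orbWeight A σ x := hx
      by_cases hxs : x ∈ c.support
      · rw [hin x hxs] at hx'
        rcases hw with hw | hw <;> rw [hw] at hx' <;> norm_num at hx'
      · rw [orbWeight_of_involutive hA (hσ x) (hout x hxs)] at hx'
        norm_num at hx'
end

section
/- Let B be a finite bicyclic graph of ∞-type that has a perfect matching, and suppose the two cycles of B share at least one vertex. Then B has at most one independent cycle. -/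
/-!
Suppose `c` and `d` are distinct independent cycles; being of ∞-type, `B` makes them edge-disjoint.
Since `B` and `B - V(c)` have perfect matchings, both have an even number of vertices, so `c` has
even length and itself has a perfect matching. Together with a perfect matching of `B - V(c)` this
gives a perfect matching `M` of `B` matching every vertex of `c` along an edge of `c`
(`exists_partner_of_indep`). Likewise there is `M'` matching every vertex of `d` along an edge
of `d`.

At a common vertex `x` the two matchings use different edges, one in `c` and the other in `d`. Every
component of the symmetric difference of `M` and `M'` is an isolated vertex or a cycle, so some cycle
`q` of `B` contains both of these edges. By the ∞-type property a cycle meeting `c` in an edge equals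
`c`, and a cycle meeting `d` in an edge equals `d`; hence `c = q = d`.

Perfect matchings are handled as partner functions, see `IsPartner`.
-/

open SimpleGraph

/-- `f` is the partner function of a perfect matching of `G`: it sends each vertex to the vertex
it is matched with. -/
def IsPartner {V : Type*} (G : SimpleGraph V) (f : V → V) : Prop :=
  (∀ v, G.Adj v (f v)) ∧ ∀ v, f (f v) = v

lemma HasPM.exists_isPartner {V : Type*} [DecidableEq V] {G : SimpleGraph V} (h : HasPM G) :
    ∃ f, IsPartner G f := by
  obtain ⟨M, hM, hM1⟩ := h
  have key : ∀ v, ∃ w, s(v, w) ∈ M ∧ ∀ e ∈ M, v ∈ e → e = s(v, w) := by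
    intro v
    obtain ⟨e, he⟩ := Finset.card_eq_one.mp (hM1 v)
    have hmem : e ∈ M ∧ v ∈ e := by
      have : e ∈ M.filter (fun e => v ∈ e) := by rw [he]; simp
      simpa using this
    obtain ⟨w, rfl⟩ := Sym2.mem_iff_exists.mp hmem.2
    refine ⟨w, hmem.1, fun e' he' hv => ?_⟩
    have : e' ∈ M.filter (fun e => v ∈ e) := by simp [he', hv]
    rw [he] at this
    simpa using this
  choose f hf hu using key
  refine ⟨f, fun v => hM _ (hf v), fun v => ?_⟩
  have := hu (f v) _ (hf v) (by simp)
  rw [Sym2.eq_swap] at this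
  exact (Sym2.congr_right.mp this).symm

/-- The perfect matching with partner function `f`, as a subgraph. -/
def IsPartner.toSubgraph {V : Type*} {G : SimpleGraph V} {f : V → V} (h : IsPartner G f) :
    G.Subgraph where
  verts := Set.univ
  Adj a b := f a = b
  adj_sub := by rintro a _ rfl; exact h.1 a
  edge_vert _ := Set.mem_univ _
  symm := ⟨by rintro a _ rfl; exact h.2 a⟩

lemma IsPartner.isPerfectMatching {V : Type*} {G : SimpleGraph V} {f : V → V}
    (h : IsPartner G f) : h.toSubgraph.IsPerfectMatching :=
  ⟨fun v _ => ⟨f v, rfl, fun _ hy => Eq.symm hy⟩, fun _ => Set.mem_univ _⟩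

lemma IsPartner.even_card {V : Type*} [Fintype V] {G : SimpleGraph V} {f : V → V}
    (h : IsPartner G f) : Even (Fintype.card V) :=
  h.isPerfectMatching.even_card

/-- A path of odd length has a perfect matching: its first, third, fifth, … edges. -/
lemma exists_partner_of_path {V : Type*} [DecidableEq V] {G : SimpleGraph V} :
    ∀ {a b : V} (p : G.Walk a b), p.IsPath → Odd p.length →
      ∃ f : V → V, ∀ v ∈ p.support, f v ∈ p.support ∧ f (f v) = v ∧ s(v, f v) ∈ p.edges
  | _, _, .nil, _, ho => by simp at ho
  | a, _, .cons (v := b) hab .nil, _, _ => by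
    have := hab.ne
    refine ⟨fun v => if v = a then b else a, ?_⟩
    intro v hv
    simp at hv
    rcases hv with rfl | rfl <;> simp [this, this.symm, Sym2.eq_swap]
  | a, _, .cons (v := b) hab (.cons hbc p), hp, ho => by
    have ho' : Odd p.length := by
      simp only [Walk.length_cons] at ho
      grind
    simp only [Walk.cons_isPath_iff, Walk.support_cons, List.mem_cons, not_or] at hp
    obtain ⟨f, hf⟩ := exists_partner_of_path p hp.1.1 ho'
    have hba := hp.2.1
    have ha := hp.2.2
    have hb := hp.1.2
    refine ⟨fun v => if v = a then b else if v = b then a else f v, ?_⟩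
    intro v hv
    simp only [Walk.support_cons, List.mem_cons] at hv
    rcases hv with rfl | rfl | hv
    · simp [Ne.symm hba]
    · simp [Ne.symm hba, Sym2.eq_swap]
    · obtain ⟨h1, h2, h3⟩ := hf v hv
      have e1 : v ≠ a := fun h => ha (h ▸ hv)
      have e2 : v ≠ b := fun h => hb (h ▸ hv)
      have e3 : f v ≠ a := fun h => ha (h ▸ h1)
      have e4 : f v ≠ b := fun h => hb (h ▸ h1)
      simp [e1, e2, e3, e4, h1, h2, h3]

/-- If `G` has a perfect matching and the cycle `c` is independent, then `c` has even length, and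
`G` has a perfect matching in which every vertex of `c` is matched along an edge of `c`. -/
lemma exists_partner_of_indep {V : Type*} [Fintype V] [DecidableEq V] {G : SimpleGraph V}
    (hpm : HasPM G) {u : V} (c : G.Walk u u) (hc : c.IsCycle) (hi : IsIndep G c) :
    ∃ f, IsPartner G f ∧ ∀ v ∈ c.support, s(v, f v) ∈ c.edges := by
  obtain ⟨f₀, hf₀⟩ := hpm.exists_isPartner
  obtain ⟨g, hg⟩ := HasPM.exists_isPartner hi
  have ev := hf₀.even_card
  have ev' := hg.even_card
  cases c with
  | nil => simp at hc
  | cons h p =>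
    rw [Walk.cons_isCycle_iff] at hc
    have hsupp : ∀ v, v ∈ (Walk.cons h p).support ↔ v ∈ p.support := by
      intro v
      simp only [Walk.support_cons, List.mem_cons, or_iff_right_iff_imp]
      rintro rfl
      exact p.end_mem_support
    have hodd : Odd p.length := by
      have hcard : Fintype.card {x : V | x ∉ (Walk.cons h p).support} + (p.length + 1)
          = Fintype.card V := by
        have h1 : p.support.toFinset.card = p.length + 1 := by
          rw [List.toFinset_card_of_nodup hc.1.support_nodup, Walk.length_support]
        have h2 : Fintype.card {x : V | x ∉ (Walk.cons h p).support}
            = (p.support.toFinset)ᶜ.card := by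
          rw [Fintype.card_subtype]
          congr 1
          ext x
          simp [hsupp x, -Walk.support_cons]
        rw [h2, ← h1, Finset.card_compl_add_card]
      grind
    obtain ⟨f, hf⟩ := exists_partner_of_path p hc.1 hodd
    refine ⟨fun v => if hv : v ∈ (Walk.cons h p).support then f v else (g ⟨v, hv⟩ : V),
      ⟨fun v => ?_, fun v => ?_⟩, fun v hv => ?_⟩
    · by_cases hv : v ∈ (Walk.cons h p).support
      · simp only [hv, dite_true]
        exact p.adj_of_mem_edges (hf v ((hsupp v).mp hv)).2.2
      · simp only [hv, dite_false]
        exact hg.1 ⟨v, hv⟩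
    · by_cases hv : v ∈ (Walk.cons h p).support
      · obtain ⟨h1, h2, -⟩ := hf v ((hsupp v).mp hv)
        simp only [hv, dite_true, (hsupp _).mpr h1, h2]
      · have h1 : (g ⟨v, hv⟩ : V) ∉ (Walk.cons h p).support := (g ⟨v, hv⟩).2
        simp only [hv, dite_false, h1, Subtype.coe_eta, hg.2]
    · simp only [hv, dite_true, Walk.edges_cons, List.mem_cons]
      exact Or.inr (hf v ((hsupp v).mp hv)).2.2

/-- Two perfect matchings of `G` that match `x` differently yield a cycle through both matching
edges at `x`, namely the component of `x` in their symmetric difference. -/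
lemma exists_cycle_of_partners {V : Type*} [Fintype V] {G : SimpleGraph V}
    {f g : V → V} (hf : IsPartner G f) (hg : IsPartner G g) {x : V} (hx : f x ≠ g x) :
    ∃ q : G.Walk x x, q.IsCycle ∧ s(x, f x) ∈ q.edges ∧ s(x, g x) ∈ q.edges := by
  classical
  set H := symmDiff hf.toSubgraph.spanningCoe hg.toSubgraph.spanningCoe with hH
  have hcyc : H.IsCycles := hf.isPerfectMatching.symmDiff_isCycles hg.isPerfectMatching
  have hadj : ∀ a b, H.Adj a b ↔ (f a = b ∧ ¬ g a = b) ∨ (g a = b ∧ ¬ f a = b) := fun a b => by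
    simp [hH, symmDiff_def, IsPartner.toSubgraph]
  have h1 : H.Adj x (f x) := (hadj _ _).mpr (Or.inl ⟨rfl, hx.symm⟩)
  have h2 : H.Adj x (g x) := (hadj _ _).mpr (Or.inr ⟨rfl, hx⟩)
  have hle : H ≤ G := by
    intro a b hab
    rcases (hadj a b).mp hab with ⟨rfl, -⟩ | ⟨rfl, -⟩
    exacts [hf.1 a, hg.1 a]
  obtain ⟨q, hq, -⟩ := hcyc.exists_cycle_toSubgraph_verts_eq_connectedComponentSupp
    (c := H.connectedComponentMk x) (v := x) rfl ⟨_, h1⟩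
  have hall := hq.adj_toSubgraph_iff_of_isCycles hcyc (v := x) (by simp)
  refine ⟨q.mapLe hle, hq.mapLe hle, ?_, ?_⟩
  · simpa [Walk.adj_toSubgraph_iff_mem_edges] using (hall _).mpr h1
  · simpa [Walk.adj_toSubgraph_iff_mem_edges] using (hall _).mpr h2

/-- An ∞-type bicyclic graph with a perfect matching whose two cycles
share at least one vertex has at most one independent cycle. -/
theorem stmt7 {V : Type*} [Fintype V] [DecidableEq V] (B : SimpleGraph V)
    (hB : Bicyclic V B) (hinf : InfinityType B) (hpm : HasPM B)
    (hshare : ∀ (u v : V) (c : B.Walk u u) (d : B.Walk v v), c.IsCycle → d.IsCycle →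
      ∃ x, x ∈ c.support ∧ x ∈ d.support) :
    ∀ (u v : V) (c : B.Walk u u) (d : B.Walk v v), c.IsCycle → d.IsCycle →
      IsIndep B c → IsIndep B d → SameCycle c d := by
  intro u v c d hc hd hic hid
  by_contra hne
  obtain ⟨x, hxc, hxd⟩ := hshare u v c d hc hd
  obtain ⟨f, hf, hfc⟩ := exists_partner_of_indep hpm c hc hic
  obtain ⟨g, hg, hgd⟩ := exists_partner_of_indep hpm d hd hid
  have hfg : f x ≠ g x := fun h =>
    hinf u v c d hc hd hne _ (hfc x hxc) (h ▸ hgd x hxd)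
  obtain ⟨q, hq, h1, h2⟩ := exists_cycle_of_partners hf hg hfg
  have hcq : SameCycle c q := by
    by_contra h
    exact hinf u x c q hc hq h _ (hfc x hxc) h1
  have hdq : SameCycle d q := by
    by_contra h
    exact hinf v x d q hd hq h _ (hgd x hxd) h2
  exact hne (hcq.trans hdq.symm)
end
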